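/- arXiv:1609.03122 — 13 statements merged into one kernel-verified Lean document; each statement's English description precedes it below -/
import Mathlib

section
/- Let Γ₂ = ⟨u, v⟩_ℤ be the sublattice of the Gaussian integers ℤ[i] generated over ℤ by two ℝ-linearly independent Gaussian integers u and v. Then Γ₂ is invariant under multiplication by i (i.e., iΓ₂ = Γ₂) if and only if Im(u·conj(v)) divides each of N(u), N(v), and Re(u·conj(v)). -/
open Complex

/-- Let `Γ₂ = ⟨u, v⟩_ℤ` be the sublattice of the Gaussian integers `ℤ[i] ⊆ ℂ` generated
by two `ℝ`-linearly independent Gaussian integers `u` and `v`.  Then `iΓ₂ = Γ₂` if and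
only if `Im(u·conj v)` divides each of `N(u)`, `N(v)` and `Re(u·conj v)`. -/
theorem mul_I_invariant_iff (u v : ℂ) (u₁ u₂ v₁ v₂ : ℤ)
    (hu : u = u₁ + u₂ * I) (hv : v = v₁ + v₂ * I)
    (hind : LinearIndependent ℝ ![u, v])
    (Γ₂ : Set ℂ) (hΓ₂ : Γ₂ = {z | ∃ a b : ℤ, z = a * u + b * v})
    (ruv iuv nu nv : ℤ)
    (hruv : u * starRingEnd ℂ v = ruv + iuv * I)
    (hnu : u * starRingEnd ℂ u = (nu : ℂ))
    (hnv : v * starRingEnd ℂ v = (nv : ℂ)) :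
    (fun z => I * z) '' Γ₂ = Γ₂ ↔ (iuv ∣ nu ∧ iuv ∣ nv ∧ iuv ∣ ruv) := by
  have key : ∀ a b c d : ℤ, (a : ℂ) + b * I = c + d * I ↔ a = c ∧ b = d := by
    intro a b c d
    simp [Complex.ext_iff]
  have hr : ruv = u₁ * v₁ + u₂ * v₂ ∧ iuv = u₂ * v₁ - u₁ * v₂ := by
    rw [← key, ← hruv, hu, hv]
    simp only [map_add, map_mul, conj_I, map_intCast]
    push_cast
    linear_combination (-u₂ * v₂ : ℂ) * I_sq
  have hn : nu = u₁ ^ 2 + u₂ ^ 2 := by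
    have : (nu : ℂ) = ((u₁ ^ 2 + u₂ ^ 2 : ℤ) : ℂ) := by
      rw [← hnu, hu]
      simp only [map_add, map_mul, conj_I, map_intCast]
      push_cast
      linear_combination (-u₂ * u₂ : ℂ) * I_sq
    exact_mod_cast this
  have hm : nv = v₁ ^ 2 + v₂ ^ 2 := by
    have : (nv : ℂ) = ((v₁ ^ 2 + v₂ ^ 2 : ℤ) : ℂ) := by
      rw [← hnv, hv]
      simp only [map_add, map_mul, conj_I, map_intCast]
      push_cast
      linear_combination (-v₂ * v₂ : ℂ) * I_sq
    exact_mod_cast this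
  obtain ⟨hr, hi⟩ := hr
  have hD : iuv ≠ 0 := by
    intro h0
    rw [LinearIndependent.pair_iff] at hind
    have h0' : (u₂ * v₁ - u₁ * v₂ : ℂ) = 0 := by exact_mod_cast (hi.symm.trans h0)
    have h1 := hind v₁ (-u₁) (by
      simp only [real_smul, hu, hv]; push_cast; linear_combination I * h0')
    have h2 := hind v₂ (-u₂) (by
      simp only [real_smul, hu, hv]; push_cast; linear_combination -h0')
    have e1 : u₁ = 0 := by simpa using h1.2
    have e2 : u₂ = 0 := by simpa using h2.2
    have := hind 1 0 (by simp [hu, e1, e2])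
    simp at this
  have lin : ∀ x y a b : ℤ, (I * (x + y * I) : ℂ) = a * u + b * v ↔
      -y = a * u₁ + b * v₁ ∧ x = a * u₂ + b * v₂ := by
    intro x y a b
    rw [← key, hu, hv]
    push_cast
    constructor <;> intro h
    · linear_combination h - (y : ℂ) * I_sq
    · linear_combination h + (y : ℂ) * I_sq
  constructor
  · intro h
    have hmem : ∀ z ∈ Γ₂, I * z ∈ Γ₂ := fun z hz => h ▸ ⟨z, hz, rfl⟩
    have hU := hmem u (by rw [hΓ₂]; exact ⟨1, 0, by simp⟩)
    have hV := hmem v (by rw [hΓ₂]; exact ⟨0, 1, by simp⟩)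
    rw [hΓ₂] at hU hV
    obtain ⟨a, b, hab⟩ := hU
    obtain ⟨c, d, hcd⟩ := hV
    have hab' := (lin u₁ u₂ a b).1 (hu ▸ hab)
    have hcd' := (lin v₁ v₂ c d).1 (hv ▸ hcd)
    obtain ⟨p, q⟩ := hab'
    obtain ⟨r, s⟩ := hcd'
    refine ⟨⟨-b, ?_⟩, ⟨c, ?_⟩, ⟨a, ?_⟩⟩
    · rw [hn, hi]; linear_combination u₁ * q - u₂ * p
    · rw [hm, hi]; linear_combination v₁ * s - v₂ * r
    · rw [hr, hi]; linear_combination v₁ * q - v₂ * p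
  · rintro ⟨⟨b, hb⟩, ⟨c, hc⟩, ⟨a, ha⟩⟩
    have hU : I * u = a * u + (-b : ℤ) * v := by
      have := (lin u₁ u₂ a (-b)).2 ⟨by
        apply mul_left_cancel₀ hD
        linear_combination u₁ * ha - v₁ * hb - u₁ * hr + v₁ * hn - u₂ * hi, by
        apply mul_left_cancel₀ hD
        linear_combination u₂ * ha - v₂ * hb - u₂ * hr + v₂ * hn + u₁ * hi⟩
      rwa [← hu] at this
    have hV : I * v = c * u + (-a : ℤ) * v := by
      have := (lin v₁ v₂ c (-a)).2 ⟨by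
        apply mul_left_cancel₀ hD
        linear_combination u₁ * hc - v₁ * ha - u₁ * hm + v₁ * hr - v₂ * hi, by
        apply mul_left_cancel₀ hD
        linear_combination u₂ * hc - v₂ * ha - u₂ * hm + v₂ * hr + v₁ * hi⟩
      rwa [← hv] at this
    push_cast at hU hV
    have hmem : ∀ z ∈ Γ₂, I * z ∈ Γ₂ := by
      rw [hΓ₂]
      rintro z ⟨x, y, rfl⟩
      refine ⟨x * a + y * c, -x * b - y * a, ?_⟩
      push_cast
      linear_combination (x : ℂ) * hU + (y : ℂ) * hV
    have hneg : ∀ z ∈ Γ₂, -z ∈ Γ₂ := by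
      rw [hΓ₂]
      rintro z ⟨x, y, rfl⟩
      exact ⟨-x, -y, by push_cast; ring⟩
    ext z
    constructor
    · rintro ⟨w, hw, rfl⟩
      exact hmem w hw
    · intro hz
      refine ⟨-(I * z), hneg _ (hmem z hz), ?_⟩
      show I * -(I * z) = z
      linear_combination -z * I_sq
end

section
/- Let Γ₂ = ⟨u, v⟩_ℤ be the sublattice of the Gaussian integers ℤ[i] generated over ℤ by two ℝ-linearly independent Gaussian integers u and v. Then Γ₂ is invariant under complex conjugation (i.e., conj(Γ₂) = Γ₂) if and only if Im(u·conj(v)) divides each of Im(u²), Im(v²), and Im(uv). -/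
open Complex

/-- Let `Γ₂ = ⟨u, v⟩_ℤ` be the sublattice of the Gaussian integers `ℤ[i] ⊆ ℂ` generated
by two `ℝ`-linearly independent Gaussian integers `u` and `v`.  Then `conj Γ₂ = Γ₂` if
and only if `Im(u·conj v)` divides each of `Im(u²)`, `Im(v²)` and `Im(uv)`. -/
theorem conj_invariant_iff (u v : ℂ) (u₁ u₂ v₁ v₂ : ℤ)
    (hu : u = u₁ + u₂ * I) (hv : v = v₁ + v₂ * I)
    (hind : LinearIndependent ℝ ![u, v])
    (Γ₂ : Set ℂ) (hΓ₂ : Γ₂ = {z | ∃ a b : ℤ, z = a * u + b * v})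
    (ruv iuv ru2 iu2 rv2 iv2 rmuv imuv : ℤ)
    (hruv : u * starRingEnd ℂ v = ruv + iuv * I)
    (hu2 : u ^ 2 = ru2 + iu2 * I)
    (hv2 : v ^ 2 = rv2 + iv2 * I)
    (hmuv : u * v = rmuv + imuv * I) :
    (fun z => starRingEnd ℂ z) '' Γ₂ = Γ₂ ↔ (iuv ∣ iu2 ∧ iuv ∣ iv2 ∧ iuv ∣ imuv) := by
  have e1 : iuv = u₂ * v₁ - u₁ * v₂ := by
    have h := congrArg Complex.im hruv
    simp [hu, hv] at h
    have h' : ((u₂ * v₁ - u₁ * v₂ : ℤ) : ℝ) = (iuv : ℤ) := by push_cast; linarith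
    exact (Int.cast_injective h').symm
  have e2 : iu2 = 2 * u₁ * u₂ := by
    have h := congrArg Complex.im hu2
    simp [hu, pow_two] at h
    have h' : ((2 * u₁ * u₂ : ℤ) : ℝ) = (iu2 : ℤ) := by push_cast; linarith
    exact (Int.cast_injective h').symm
  have e3 : iv2 = 2 * v₁ * v₂ := by
    have h := congrArg Complex.im hv2
    simp [hv, pow_two] at h
    have h' : ((2 * v₁ * v₂ : ℤ) : ℝ) = (iv2 : ℤ) := by push_cast; linarith
    exact (Int.cast_injective h').symm
  have e4 : imuv = u₁ * v₂ + u₂ * v₁ := by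
    have h := congrArg Complex.im hmuv
    simp [hu, hv] at h
    have h' : ((u₁ * v₂ + u₂ * v₁ : ℤ) : ℝ) = (imuv : ℤ) := by push_cast; linarith
    exact (Int.cast_injective h').symm
  have hD : iuv ≠ 0 := by
    intro h0
    rw [e1] at h0
    have h0' : (u₂ : ℝ) * v₁ - u₁ * v₂ = 0 := by exact_mod_cast h0
    rw [LinearIndependent.pair_iff] at hind
    have h1 := hind v₁ (-u₁) (by
      apply Complex.ext <;> simp [hu, hv] <;> linarith)
    have h2 := hind v₂ (-u₂) (by
      apply Complex.ext <;> simp [hu, hv] <;> linarith)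
    have h3 := hind 1 0 (by
      have a1 : (u₁ : ℝ) = 0 := by linarith [h1.2]
      have a2 : (u₂ : ℝ) = 0 := by linarith [h2.2]
      apply Complex.ext <;> simp [hu, a1, a2] <;> first | exact_mod_cast a1 | exact_mod_cast a2)
    exact one_ne_zero h3.1
  have key : ∀ x y a b : ℤ, starRingEnd ℂ ((x : ℂ) + y * I) = a * u + b * v ↔
      (x = a * u₁ + b * v₁ ∧ -y = a * u₂ + b * v₂) := by
    intro x y a b
    rw [Complex.ext_iff]
    simp [hu, hv]
    norm_cast
  constructor
  · intro h
    have hmu : starRingEnd ℂ u ∈ Γ₂ := by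
      rw [← h]; exact ⟨u, by rw [hΓ₂]; exact ⟨1, 0, by simp⟩, rfl⟩
    have hmv : starRingEnd ℂ v ∈ Γ₂ := by
      rw [← h]; exact ⟨v, by rw [hΓ₂]; exact ⟨0, 1, by simp⟩, rfl⟩
    rw [hΓ₂] at hmu hmv
    obtain ⟨a, b, hab⟩ := hmu
    obtain ⟨c, d, hcd⟩ := hmv
    have k1 := (key u₁ u₂ a b).1 (by rw [← hu]; exact hab)
    have k2 := (key v₁ v₂ c d).1 (by rw [← hv]; exact hcd)
    rw [e1, e2, e3, e4]
    obtain ⟨p, q⟩ := k1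
    obtain ⟨r, s⟩ := k2
    refine ⟨⟨b, ?_⟩, ⟨-c, ?_⟩, ⟨d, ?_⟩⟩
    · linear_combination u₂ * p - u₁ * q
    · linear_combination v₂ * r - v₁ * s
    · linear_combination u₂ * r - u₁ * s
  · rintro ⟨⟨b, hb⟩, ⟨c, hc⟩, ⟨d, hd⟩⟩
    have hcu : starRingEnd ℂ u = (-d : ℤ) * u + b * v := by
      have := (key u₁ u₂ (-d) b).2 ⟨by
        apply mul_left_cancel₀ hD
        linear_combination u₁ * e1 - u₁ * hd + v₁ * hb + u₁ * e4 - v₁ * e2, by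
        apply mul_left_cancel₀ hD
        linear_combination -u₂ * e1 - u₂ * hd + v₂ * hb + u₂ * e4 - v₂ * e2⟩
      rw [← this, ← hu]
    have hcv : starRingEnd ℂ v = (-c : ℤ) * u + d * v := by
      have := (key v₁ v₂ (-c) d).2 ⟨by
        apply mul_left_cancel₀ hD
        linear_combination v₁ * e1 - u₁ * hc + v₁ * hd + u₁ * e3 - v₁ * e4, by
        apply mul_left_cancel₀ hD
        linear_combination -v₂ * e1 - u₂ * hc + v₂ * hd + u₂ * e3 - v₂ * e4⟩
      rw [← this, ← hv]
    have hsub : ∀ z ∈ Γ₂, starRingEnd ℂ z ∈ Γ₂ := by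
      rw [hΓ₂]
      rintro z ⟨m, n, rfl⟩
      refine ⟨-m * d - n * c, m * b + n * d, ?_⟩
      rw [map_add, map_mul, map_mul, hcu, hcv]
      simp only [map_intCast]
      push_cast
      ring
    ext z
    constructor
    · rintro ⟨w, hw, rfl⟩
      exact hsub w hw
    · intro hz
      exact ⟨_, hsub z hz, by simp⟩
end

section
/- Let Γ₂ = ⟨u, v⟩_ℤ be the sublattice of the Gaussian integers ℤ[i] generated over ℤ by two ℝ-linearly independent Gaussian integers u and v. Then Γ₂ is invariant under the map z ↦ i·conj(z) (i.e., i·conj(Γ₂) = Γ₂) if and only if Im(u·conj(v)) divides each of Re(u²), Re(v²), and Re(uv). -/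
open Complex

/-- Let `Γ₂ = ⟨u, v⟩_ℤ` be the sublattice of the Gaussian integers `ℤ[i] ⊆ ℂ` generated
by two `ℝ`-linearly independent Gaussian integers `u` and `v`.  Then `Γ₂` is invariant
under the diagonal reflection `z ↦ i·conj z` if and only if `Im(u·conj v)` divides each
of `Re(u²)`, `Re(v²)` and `Re(uv)`. -/
theorem mul_I_conj_invariant_iff (u v : ℂ) (u₁ u₂ v₁ v₂ : ℤ)
    (hu : u = u₁ + u₂ * I) (hv : v = v₁ + v₂ * I)
    (hind : LinearIndependent ℝ ![u, v])
    (Γ₂ : Set ℂ) (hΓ₂ : Γ₂ = {z | ∃ a b : ℤ, z = a * u + b * v})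
    (ruv iuv ru2 iu2 rv2 iv2 rmuv imuv : ℤ)
    (hruv : u * starRingEnd ℂ v = ruv + iuv * I)
    (hu2 : u ^ 2 = ru2 + iu2 * I)
    (hv2 : v ^ 2 = rv2 + iv2 * I)
    (hmuv : u * v = rmuv + imuv * I) :
    (fun z => I * starRingEnd ℂ z) '' Γ₂ = Γ₂ ↔
      (iuv ∣ ru2 ∧ iuv ∣ rv2 ∧ iuv ∣ rmuv) := by
  have e1 : iuv = u₂ * v₁ - u₁ * v₂ := by
    have := congrArg Complex.im hruv
    simp [hu, hv] at this
    have h : (iuv : ℝ) = u₂ * v₁ - u₁ * v₂ := by linarith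
    exact_mod_cast h
  have e2 : ru2 = u₁ ^ 2 - u₂ ^ 2 := by
    have := congrArg Complex.re hu2
    simp [hu, pow_two] at this
    have h : (ru2 : ℝ) = u₁ ^ 2 - u₂ ^ 2 := by linarith
    exact_mod_cast h
  have e3 : rv2 = v₁ ^ 2 - v₂ ^ 2 := by
    have := congrArg Complex.re hv2
    simp [hv, pow_two] at this
    have h : (rv2 : ℝ) = v₁ ^ 2 - v₂ ^ 2 := by linarith
    exact_mod_cast h
  have e4 : rmuv = u₁ * v₁ - u₂ * v₂ := by
    have := congrArg Complex.re hmuv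
    simp [hu, hv] at this
    have h : (rmuv : ℝ) = u₁ * v₁ - u₂ * v₂ := by linarith
    exact_mod_cast h
  have key : ∀ x y a b : ℤ, ((x : ℂ) + y * I = a * u + b * v) ↔
      (x = a * u₁ + b * v₁ ∧ y = a * u₂ + b * v₂) := by
    intro x y a b
    rw [Complex.ext_iff]
    simp [hu, hv]
    norm_cast
  have hD : iuv ≠ 0 := by
    intro h0
    rw [LinearIndependent.pair_iff] at hind
    have h0' : (u₂ * v₁ - u₁ * v₂ : ℝ) = 0 := by
      rw [h0] at e1
      exact_mod_cast e1.symm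
    have A := hind (v₂ : ℝ) (-u₂ : ℝ) (by
      apply Complex.ext <;> simp [hu, hv] <;> linarith)
    have B := hind (v₁ : ℝ) (-u₁ : ℝ) (by
      apply Complex.ext <;> simp [hu, hv] <;> linarith)
    have C := hind 1 0 (by
      have a2 : (u₂ : ℝ) = 0 := by linarith [A.2]
      have a1 : (u₁ : ℝ) = 0 := by linarith [B.2]
      apply Complex.ext <;> simp [hu, hv, a1, a2])
    exact one_ne_zero C.1
  have fu : I * starRingEnd ℂ u = (u₂ : ℂ) + u₁ * I := by
    apply Complex.ext <;> simp [hu]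
  have fv : I * starRingEnd ℂ v = (v₂ : ℂ) + v₁ * I := by
    apply Complex.ext <;> simp [hv]
  subst hΓ₂
  constructor
  · intro h
    have hU : I * starRingEnd ℂ u ∈ {z | ∃ a b : ℤ, z = a * u + b * v} := by
      rw [← h]
      exact ⟨u, ⟨1, 0, by simp⟩, rfl⟩
    have hV : I * starRingEnd ℂ v ∈ {z | ∃ a b : ℤ, z = a * u + b * v} := by
      rw [← h]
      exact ⟨v, ⟨0, 1, by simp⟩, rfl⟩
    obtain ⟨a, b, hab⟩ := hU
    obtain ⟨c, d, hcd⟩ := hV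
    rw [fu, key] at hab
    rw [fv, key] at hcd
    obtain ⟨p1, p2⟩ := hab
    obtain ⟨q1, q2⟩ := hcd
    refine ⟨⟨-b, ?_⟩, ⟨c, ?_⟩, ⟨a, ?_⟩⟩
    · rw [e1, e2]; linear_combination u₁ * p2 - u₂ * p1
    · rw [e1, e3]; linear_combination v₁ * q2 - v₂ * q1
    · rw [e1, e4]; linear_combination v₁ * p2 - v₂ * p1
  · rintro ⟨⟨b, hb⟩, ⟨c, hc⟩, ⟨a, ha⟩⟩
    have gu : I * starRingEnd ℂ u = (a : ℤ) * u + ((-b : ℤ) : ℂ) * v := by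
      rw [fu, key]
      constructor <;> apply mul_left_cancel₀ hD
      · linear_combination u₁ * ha - v₁ * hb + u₂ * e1 - u₁ * e4 + v₁ * e2
      · linear_combination u₂ * ha - v₂ * hb + u₁ * e1 - u₂ * e4 + v₂ * e2
    have gv : I * starRingEnd ℂ v = (c : ℤ) * u + ((-a : ℤ) : ℂ) * v := by
      rw [fv, key]
      constructor <;> apply mul_left_cancel₀ hD
      · linear_combination u₁ * hc - v₁ * ha + v₂ * e1 - u₁ * e3 + v₁ * e4
      · linear_combination u₂ * hc - v₂ * ha + v₁ * e1 - u₂ * e3 + v₂ * e4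
    have hsub : ∀ z ∈ {z : ℂ | ∃ a b : ℤ, z = a * u + b * v},
        I * starRingEnd ℂ z ∈ {z : ℂ | ∃ a b : ℤ, z = a * u + b * v} := by
      rintro z ⟨m, n, rfl⟩
      refine ⟨m * a + n * c, -(m * b) - n * a, ?_⟩
      simp only [map_add, map_mul, map_intCast]
      push_cast at gu gv ⊢
      linear_combination m * gu + n * gv
    ext z
    constructor
    · rintro ⟨w, hw, rfl⟩
      exact hsub w hw
    · intro hz
      refine ⟨_, hsub z hz, ?_⟩
      apply Complex.ext <;> simp
end

section
/- Let Γ₁ = ℤ[i] and Γ₂ = ⟨u, v⟩_ℤ for ℝ-linearly independent u, v ∈ ℤ[i]. If Im(u·conj(v)) divides each of N(u), N(v), Re(u·conj(v)), Re(u²), Im(u²), Re(v²), Im(v²), Re(uv), and Im(uv), then the point group of the color group H of the coloring of Γ₁ determined by Γ₂ is the full point group of ℤ[i], namely the dihedral group of order 8 generated by multiplication by i and complex conjugation (so the color group is of type p4m and the coloring is perfect). -/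
open Complex

/-- A symmetry `h` of the plane (identified with `ℂ`) is a *color symmetry* of the
coloring of `Γ₁` determined by its subgroup `Γ₂` (each coset of `Γ₂` is one color) if
there is a permutation `σ` of the colors with `c (h ℓ) = σ (c ℓ)` for all `ℓ ∈ Γ₁`. -/
def IsColorSymmetry (Γ₁ Γ₂ : AddSubgroup ℂ) (h : ℂ → ℂ) : Prop :=
  ∃ σ : Equiv.Perm (ℂ ⧸ Γ₂), ∀ ℓ ∈ Γ₁,
    (QuotientAddGroup.mk (h ℓ) : ℂ ⧸ Γ₂) = σ (QuotientAddGroup.mk ℓ)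

/-- The point group `P(H)` of the color group `H` of the coloring of `Γ₁` determined by
`Γ₂`: all isometries of the plane fixing the origin, mapping `Γ₁` onto itself, and
permuting the colors. -/
def pointColorGroup (Γ₁ Γ₂ : AddSubgroup ℂ) : Set (ℂ → ℂ) :=
  {g | Isometry g ∧ Function.Surjective g ∧ g 0 = 0 ∧
    g '' (Γ₁ : Set ℂ) = Γ₁ ∧ IsColorSymmetry Γ₁ Γ₂ g}


lemma aux_mem (f : ℂ →+ ℂ) (Γ : AddSubgroup ℂ) (u v : ℂ)
    (hΓ : Γ = AddSubgroup.closure ({u, v} : Set ℂ)) (hu : f u ∈ Γ) (hv : f v ∈ Γ) :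
    ∀ z ∈ Γ, f z ∈ Γ := by
  have : Γ ≤ Γ.comap f := by
    conv_lhs => rw [hΓ]
    rw [AddSubgroup.closure_le]
    rintro z (rfl | rfl)
    · exact hu
    · exact hv
  exact this

lemma aux_good (f : ℂ →+ ℂ) (Γ₁ Γ₂ : AddSubgroup ℂ) (hn : ∀ z, ‖f z‖ = ‖z‖)
    (h4 : ∀ z, f (f (f (f z))) = z) (h1 : ∀ z ∈ Γ₁, f z ∈ Γ₁) (h2 : ∀ z ∈ Γ₂, f z ∈ Γ₂) :
    (f : ℂ → ℂ) ∈ pointColorGroup Γ₁ Γ₂ := by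
  refine ⟨AddMonoidHomClass.isometry_of_norm f hn, fun z => ⟨_, h4 z⟩, map_zero f, ?_, ?_⟩
  · ext z
    constructor
    · rintro ⟨w, hw, rfl⟩
      exact h1 w hw
    · intro hz
      exact ⟨f (f (f z)), h1 _ (h1 _ (h1 _ hz)), h4 z⟩
  · let F : ℂ ⧸ Γ₂ →+ ℂ ⧸ Γ₂ := QuotientAddGroup.map Γ₂ Γ₂ f h2
    have hF : ∀ z : ℂ, F (QuotientAddGroup.mk z) = QuotientAddGroup.mk (f z) := fun z => rfl
    have hF4 : ∀ q, F (F (F (F q))) = q := by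
      intro q
      obtain ⟨z, rfl⟩ := QuotientAddGroup.mk_surjective q
      simp only [hF, h4]
    exact ⟨⟨F, fun q => F (F (F q)), hF4, hF4⟩, fun z _ => rfl⟩

lemma aux_zi (Γ₁ : AddSubgroup ℂ) (hΓ₁ : Γ₁ = AddSubgroup.closure ({1, I} : Set ℂ)) (a : ℂ)
    (ha : a ∈ Γ₁) (hn : ‖a‖ = 1) : ∃ k : Fin 4, a = I ^ (k : ℕ) := by
  rw [hΓ₁, AddSubgroup.mem_closure_pair] at ha
  obtain ⟨m, n, rfl⟩ := ha
  have h : (m : ℝ) * m + n * n = 1 := by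
    have := Complex.normSq_eq_norm_sq (m • (1:ℂ) + n • I)
    rw [hn, Complex.normSq_apply] at this
    simpa using this
  have h' : m * m + n * n = 1 := by exact_mod_cast h
  have hm : -1 ≤ m ∧ m ≤ 1 := ⟨by nlinarith, by nlinarith⟩
  have hn : -1 ≤ n ∧ n ≤ 1 := ⟨by nlinarith, by nlinarith⟩
  obtain ⟨hm1, hm2⟩ := hm
  obtain ⟨hn1, hn2⟩ := hn
  interval_cases m <;> interval_cases n <;> first | (exfalso; omega) | skip
  · exact ⟨2, by simp⟩
  · exact ⟨3, by simp [pow_succ]⟩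
  · exact ⟨1, by simp⟩
  · exact ⟨0, by simp⟩

/-- Case (a) of the theorem for the square lattice `Γ₁ = ℤ[i]`: if `Im(u·conj v)`
divides all of `N(u)`, `N(v)`, `Re(u·conj v)`, `Re(u²)`, `Im(u²)`, `Re(v²)`, `Im(v²)`,
`Re(uv)`, `Im(uv)`, then the point group of the color group of the coloring of `Γ₁`
determined by `Γ₂ = ⟨u, v⟩_ℤ` is the full dihedral point group of order `8` generated
by multiplication by `i` and complex conjugation (type `p4m`; the coloring is
perfect). -/
theorem pointColorGroup_p4m (u v : ℂ) (u₁ u₂ v₁ v₂ : ℤ)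
    (hu : u = u₁ + u₂ * I) (hv : v = v₁ + v₂ * I)
    (hind : LinearIndependent ℝ ![u, v])
    (Γ₁ Γ₂ : AddSubgroup ℂ)
    (hΓ₁ : Γ₁ = AddSubgroup.closure ({1, I} : Set ℂ))
    (hΓ₂ : Γ₂ = AddSubgroup.closure ({u, v} : Set ℂ))
    (ruv iuv nu nv ru2 iu2 rv2 iv2 rmuv imuv : ℤ)
    (hruv : u * starRingEnd ℂ v = ruv + iuv * I)
    (hnu : u * starRingEnd ℂ u = (nu : ℂ))
    (hnv : v * starRingEnd ℂ v = (nv : ℂ))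
    (hu2 : u ^ 2 = ru2 + iu2 * I)
    (hv2 : v ^ 2 = rv2 + iv2 * I)
    (hmuv : u * v = rmuv + imuv * I)
    (hdvd : iuv ∣ nu ∧ iuv ∣ nv ∧ iuv ∣ ruv ∧ iuv ∣ ru2 ∧ iuv ∣ iu2 ∧
      iuv ∣ rv2 ∧ iuv ∣ iv2 ∧ iuv ∣ rmuv ∧ iuv ∣ imuv) :
    pointColorGroup Γ₁ Γ₂ =
      {g | ∃ k : Fin 4, g = (fun z => I ^ (k : ℕ) * z) ∨
        g = (fun z => I ^ (k : ℕ) * starRingEnd ℂ z)} := by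
  have hu2' := hu2
  have hv2' := hv2
  obtain ⟨h1, h2⟩ := Complex.ext_iff.1 hruv
  obtain ⟨h3, -⟩ := Complex.ext_iff.1 hnu
  obtain ⟨h4, -⟩ := Complex.ext_iff.1 hnv
  obtain ⟨-, h5⟩ := Complex.ext_iff.1 hu2
  obtain ⟨-, h6⟩ := Complex.ext_iff.1 hv2
  obtain ⟨-, h7⟩ := Complex.ext_iff.1 hmuv
  simp [hu, hv, pow_two] at h1 h2 h3 h4 h5 h6 h7
  have hne : (iuv : ℝ) ≠ 0 := by
    intro h0
    rw [h0] at h2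
    rw [LinearIndependent.pair_iff] at hind
    have hA := hind (v₁ : ℝ) (-u₁ : ℝ) (by
      apply Complex.ext
      · simp [hu, hv]; ring
      · simp [hu, hv]; linarith)
    have hB := hind (v₂ : ℝ) (-u₂ : ℝ) (by
      apply Complex.ext
      · simp [hu, hv]; linarith
      · simp [hu, hv]; ring)
    have hu0 : u = 0 := by
      have e1 : (u₁ : ℝ) = 0 := by linarith [hA.2]
      have e2 : (u₂ : ℝ) = 0 := by linarith [hB.2]
      apply Complex.ext <;> simp [hu, e1, e2]
    have := (hind 1 0 (by simp [hu0])).1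
    norm_num at this
  obtain ⟨⟨a1, d1⟩, ⟨a2, d2⟩, ⟨a3, d3⟩, -, ⟨a5, d5⟩, -, ⟨a7, d7⟩, -, ⟨a9, d9⟩⟩ := hdvd
  have d1' : (nu : ℝ) = iuv * a1 := by exact_mod_cast d1
  have d2' : (nv : ℝ) = iuv * a2 := by exact_mod_cast d2
  have d3' : (ruv : ℝ) = iuv * a3 := by exact_mod_cast d3
  have d5' : (iu2 : ℝ) = iuv * a5 := by exact_mod_cast d5
  have d7' : (iv2 : ℝ) = iuv * a7 := by exact_mod_cast d7
  have d9' : (imuv : ℝ) = iuv * a9 := by exact_mod_cast d9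
  have key : ∀ (w : ℂ) (a b : ℤ), (iuv : ℝ) * w.re = iuv * a * u₁ + iuv * b * v₁ →
      (iuv : ℝ) * w.im = iuv * a * u₂ + iuv * b * v₂ → w ∈ Γ₂ := by
    intro w a b e1 e2
    rw [hΓ₂, AddSubgroup.mem_closure_pair]
    refine ⟨a, b, ?_⟩
    apply Complex.ext
    · apply mul_left_cancel₀ hne
      rw [e1]; simp [hu, hv, -mul_eq_mul_left_iff]; ring
    · apply mul_left_cancel₀ hne
      rw [e2]; simp [hu, hv, -mul_eq_mul_left_iff]; ring
  have m1 : I * u ∈ Γ₂ := key _ a3 (-a1)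
    (by push_cast; rw [mul_neg, ← d1', ← d3', ← h1, ← h2, ← h3]; simp [hu]; ring)
    (by push_cast; rw [mul_neg, ← d1', ← d3', ← h1, ← h2, ← h3]; simp [hu]; ring)
  have m2 : I * v ∈ Γ₂ := key _ a2 (-a3)
    (by push_cast; rw [mul_neg, ← d2', ← d3', ← h1, ← h2, ← h4]; simp [hv]; ring)
    (by push_cast; rw [mul_neg, ← d2', ← d3', ← h1, ← h2, ← h4]; simp [hv]; ring)
  have m3 : starRingEnd ℂ u ∈ Γ₂ := key _ (-a9) a5
    (by push_cast; rw [mul_neg, ← d5', ← d9', ← h2, ← h5, ← h7]; simp [hu]; ring)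
    (by push_cast; rw [mul_neg, ← d5', ← d9', ← h2, ← h5, ← h7]; simp [hu]; ring)
  have m4 : starRingEnd ℂ v ∈ Γ₂ := key _ (-a7) a9
    (by push_cast; rw [mul_neg, ← d7', ← d9', ← h2, ← h6, ← h7]; simp [hv]; ring)
    (by push_cast; rw [mul_neg, ← d7', ← d9', ← h2, ← h6, ← h7]; simp [hv]; ring)
  have g1 : (1 : ℂ) ∈ Γ₁ := by rw [hΓ₁]; exact AddSubgroup.subset_closure (by simp)
  have gI : I ∈ Γ₁ := by rw [hΓ₁]; exact AddSubgroup.subset_closure (by simp)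
  have I2 := aux_mem (AddMonoidHom.mulLeft I) Γ₂ u v hΓ₂ m1 m2
  have I1 := aux_mem (AddMonoidHom.mulLeft I) Γ₁ 1 I hΓ₁ (by simpa using gI)
    (by simpa using neg_mem g1)
  have C2 := aux_mem (starRingEnd ℂ : ℂ →+* ℂ).toAddMonoidHom Γ₂ u v hΓ₂ m3 m4
  have C1 := aux_mem (starRingEnd ℂ : ℂ →+* ℂ).toAddMonoidHom Γ₁ 1 I hΓ₁ (by simpa using g1)
    (by simpa using gI)
  have P : ∀ Γ : AddSubgroup ℂ, (∀ z ∈ Γ, I * z ∈ Γ) → ∀ k : ℕ, ∀ z ∈ Γ, I ^ k * z ∈ Γ := by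
    intro Γ h k
    induction k with
    | zero => simp
    | succ k ih =>
      intro z hz
      rw [pow_succ', mul_assoc]
      exact h _ (ih z hz)
  have P1 := P Γ₁ I1
  have P2 := P Γ₂ I2
  have q4 : ∀ k : ℕ, I ^ k * (I ^ k * (I ^ k * I ^ k)) = 1 := by
    intro k
    rw [← mul_pow, ← mul_pow, ← mul_pow]
    simp
  have qc : ∀ k : ℕ, I ^ k * starRingEnd ℂ (I ^ k) = 1 := by
    intro k
    rw [map_pow, ← mul_pow]
    simp
  ext g
  constructor
  · rintro ⟨hg, hs, h0, him, -⟩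
    let e : ℂ ≃ᵢ ℂ := IsometryEquiv.mk' g (Function.surjInv hs) (Function.surjInv_eq hs) hg
    let L : ℂ ≃ₗᵢ[ℝ] ℂ := e.toRealLinearIsometryEquivOfMapZero h0
    have hL : ∀ z, L z = g z := fun z => rfl
    have hm : g 1 ∈ Γ₁ := by
      have : g 1 ∈ g '' (Γ₁ : Set ℂ) := ⟨1, g1, rfl⟩
      rw [him] at this
      exact this
    have hn : ‖g 1‖ = 1 := by rw [← hL, L.norm_map]; simp
    obtain ⟨k, hk⟩ := aux_zi Γ₁ hΓ₁ _ hm hn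
    obtain ⟨a, ha | ha⟩ := linear_isometry_complex L
    · have e1 : ∀ z, g z = a * z := fun z => by rw [← hL, ha]; simp
      have e2 := e1 1
      rw [hk, mul_one] at e2
      exact ⟨k, Or.inl (funext fun z => by rw [e1, e2])⟩
    · have e1 : ∀ z, g z = a * starRingEnd ℂ z := fun z => by rw [← hL, ha]; simp
      have e2 := e1 1
      rw [hk, map_one, mul_one] at e2
      exact ⟨k, Or.inr (funext fun z => by rw [e1, e2])⟩
  · rintro ⟨k, rfl | rfl⟩
    · refine aux_good (AddMonoidHom.mulLeft (I ^ (k : ℕ))) Γ₁ Γ₂ (by simp) ?_ (P1 k) (P2 k)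
      intro z
      simp only [AddMonoidHom.coe_mulLeft]
      linear_combination z * q4 k
    · refine aux_good ((AddMonoidHom.mulLeft (I ^ (k : ℕ))).comp
        (starRingEnd ℂ : ℂ →+* ℂ).toAddMonoidHom) Γ₁ Γ₂ (by simp) ?_
        (fun z hz => P1 k _ (C1 z hz)) (fun z hz => P2 k _ (C2 z hz))
      have h2 : ∀ z : ℂ, I ^ (k : ℕ) * starRingEnd ℂ (I ^ (k : ℕ) * starRingEnd ℂ z) = z := by
        intro z
        rw [map_mul, Complex.conj_conj]
        linear_combination z * qc k
      intro z
      change I ^ (k : ℕ) * starRingEnd ℂ (I ^ (k : ℕ) * starRingEnd ℂ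
        (I ^ (k : ℕ) * starRingEnd ℂ (I ^ (k : ℕ) * starRingEnd ℂ z))) = z
      rw [h2, h2]
end

section
/- Let Γ₁ = ℤ[i] and Γ₂ = ⟨u, v⟩_ℤ for ℝ-linearly independent u, v ∈ ℤ[i]. If Im(u·conj(v)) divides each of N(u), N(v), and Re(u·conj(v)), but divides none of Im(u²), Im(v²), and Im(uv), then the point group of the color group H of the coloring of Γ₁ determined by Γ₂ is the cyclic group of order 4 generated by multiplication by i (so the color group is of type p4). -/
open Complex

theorem aux_color (Γ₁ Γ : AddSubgroup ℂ) (c d : ℂ) (h : c * d = 1)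
    (hc : ∀ z ∈ Γ, c * z ∈ Γ) (hd : ∀ z ∈ Γ, d * z ∈ Γ) :
    IsColorSymmetry Γ₁ Γ (fun z => c * z) := by
  refine ⟨⟨QuotientAddGroup.map Γ Γ (AddMonoidHom.mulLeft c) (fun z hz => hc z hz),
    QuotientAddGroup.map Γ Γ (AddMonoidHom.mulLeft d) (fun z hz => hd z hz), ?_, ?_⟩, ?_⟩
  · intro x
    induction x using QuotientAddGroup.induction_on with
    | H z =>
      change (QuotientAddGroup.mk (d * (c * z)) : ℂ ⧸ Γ) = QuotientAddGroup.mk z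
      rw [← mul_assoc, mul_comm d c, h, one_mul]
  · intro x
    induction x using QuotientAddGroup.induction_on with
    | H z =>
      change (QuotientAddGroup.mk (c * (d * z)) : ℂ ⧸ Γ) = QuotientAddGroup.mk z
      rw [← mul_assoc, h, one_mul]
  · intro l _
    rfl

theorem aux_pow (Γ : AddSubgroup ℂ) (h : ∀ z ∈ Γ, I * z ∈ Γ) (k : ℕ) :
    ∀ z ∈ Γ, I ^ k * z ∈ Γ := by
  induction k with
  | zero => simp
  | succ k ih =>
    intro z hz
    rw [pow_succ, mul_assoc]
    exact ih _ (h z hz)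

theorem aux_inv (k : ℕ) : I ^ k * I ^ (3 * k) = 1 := by
  rw [← pow_add, show k + 3 * k = 4 * k by ring, pow_mul, I_pow_four, one_pow]

theorem aux_mem_s8 (Γ : AddSubgroup ℂ) (k : ℕ) (h : ∀ z ∈ Γ, I * z ∈ Γ) :
    (fun z => I ^ k * z) '' (Γ : Set ℂ) = Γ := by
  ext z
  constructor
  · rintro ⟨w, hw, rfl⟩
    exact aux_pow Γ h k w hw
  · intro hz
    refine ⟨I ^ (3 * k) * z, aux_pow Γ h _ z hz, ?_⟩
    simp only
    rw [← mul_assoc, aux_inv, one_mul]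

theorem aux_isom (g : ℂ → ℂ) (hg : Isometry g) (hs : Function.Surjective g) (h0 : g 0 = 0) :
    ∃ a : ℂ, ‖a‖ = 1 ∧ ((∀ z, g z = a * z) ∨ ∀ z, g z = a * starRingEnd ℂ z) := by
  let e : ℂ ≃ᵢ ℂ := IsometryEquiv.mk (Equiv.ofBijective g ⟨hg.injective, hs⟩) hg
  let f : ℂ ≃ₗᵢ[ℝ] ℂ := e.toRealLinearIsometryEquivOfMapZero h0
  have hf : ∀ z, f z = g z := fun z => rfl
  obtain ⟨a, ha | ha⟩ := linear_isometry_complex f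
  · refine ⟨a, Circle.norm_coe a, Or.inl fun z => ?_⟩
    rw [← hf, ha, rotation_apply]
  · refine ⟨a, Circle.norm_coe a, Or.inr fun z => ?_⟩
    rw [← hf, ha]
    simp [rotation_apply]

theorem aux_unit (a : ℂ) (m n : ℤ) (h : a = m + n * I) (ha : ‖a‖ = 1) :
    ∃ k : Fin 4, a = I ^ (k : ℕ) := by
  have h1 : m * m + n * n = 1 := by
    have := Complex.normSq_eq_norm_sq a
    rw [ha, h, Complex.normSq_apply] at this
    simp at this
    exact_mod_cast this
  have hm : -1 ≤ m := by nlinarith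
  have hm2 : m ≤ 1 := by nlinarith
  have hn : -1 ≤ n := by nlinarith
  have hn2 : n ≤ 1 := by nlinarith
  subst h
  interval_cases m <;> interval_cases n <;> simp at h1
  · exact ⟨2, by simp⟩
  · exact ⟨3, by simp [pow_succ]⟩
  · exact ⟨1, by simp⟩
  · exact ⟨0, by simp⟩

/-- Case (b) for the square lattice `Γ₁ = ℤ[i]`: if `Im(u·conj v)` divides all of
`N(u)`, `N(v)`, `Re(u·conj v)` but none of `Im(u²)`, `Im(v²)`, `Im(uv)`, then the point
group of the color group of the coloring of `Γ₁` determined by `Γ₂ = ⟨u, v⟩_ℤ` is the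
cyclic group of order `4` generated by multiplication by `i` (type `p4`). -/
theorem pointColorGroup_p4 (u v : ℂ) (u₁ u₂ v₁ v₂ : ℤ)
    (hu : u = u₁ + u₂ * I) (hv : v = v₁ + v₂ * I)
    (hind : LinearIndependent ℝ ![u, v])
    (Γ₁ Γ₂ : AddSubgroup ℂ)
    (hΓ₁ : Γ₁ = AddSubgroup.closure ({1, I} : Set ℂ))
    (hΓ₂ : Γ₂ = AddSubgroup.closure ({u, v} : Set ℂ))
    (ruv iuv nu nv ru2 iu2 rv2 iv2 rmuv imuv : ℤ)
    (hruv : u * starRingEnd ℂ v = ruv + iuv * I)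
    (hnu : u * starRingEnd ℂ u = (nu : ℂ))
    (hnv : v * starRingEnd ℂ v = (nv : ℂ))
    (hu2 : u ^ 2 = ru2 + iu2 * I)
    (hv2 : v ^ 2 = rv2 + iv2 * I)
    (hmuv : u * v = rmuv + imuv * I)
    (hdvd : iuv ∣ nu ∧ iuv ∣ nv ∧ iuv ∣ ruv)
    (hndvd : ¬ iuv ∣ iu2 ∧ ¬ iuv ∣ iv2 ∧ ¬ iuv ∣ imuv) :
    pointColorGroup Γ₁ Γ₂ = {g | ∃ k : Fin 4, g = fun z => I ^ (k : ℕ) * z} := by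
  have e1 := congrArg Complex.re hruv
  have e2 := congrArg Complex.im hruv
  have e3 := congrArg Complex.re hnu
  have e4 := congrArg Complex.re hnv
  have e5 := congrArg Complex.im hmuv
  simp [hu, hv] at e1 e2 e3 e4 e5
  norm_cast at e1 e2 e3 e4 e5
  obtain ⟨⟨p, hp⟩, ⟨q, hq⟩, ⟨r, hr⟩⟩ := hdvd
  have hD : iuv ≠ 0 := by
    rintro h0
    apply hndvd.2.2
    have hn0 : u₁ * u₁ + u₂ * u₂ = 0 := by rw [e3, hp, h0, zero_mul]
    have a1 : u₁ = 0 := by nlinarith [mul_self_nonneg u₁, mul_self_nonneg u₂]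
    have a2 : u₂ = 0 := by nlinarith [mul_self_nonneg u₁, mul_self_nonneg u₂]
    rw [← e5, a1, a2]
    simp
  have m1 : ∀ z, z ∈ Γ₁ ↔ ∃ a b : ℤ, z = a + b * I := by
    intro z
    rw [hΓ₁, AddSubgroup.mem_closure_pair]
    simp [eq_comm]
  have m2 : ∀ z, z ∈ Γ₂ ↔ ∃ a b : ℤ, z = a * u + b * v := by
    intro z
    rw [hΓ₂, AddSubgroup.mem_closure_pair]
    simp [eq_comm]
  have i1 : ∀ z ∈ Γ₁, I * z ∈ Γ₁ := by
    intro z hz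
    obtain ⟨a, b, rfl⟩ := (m1 z).1 hz
    refine (m1 _).2 ⟨-b, a, ?_⟩
    push_cast
    linear_combination (b : ℂ) * I_mul_I
  have k1 : -u₂ = r * u₁ - p * v₁ := by
    apply mul_left_cancel₀ hD
    linear_combination u₁ * hr - v₁ * hp + u₁ * e1 - v₁ * e3 + u₂ * e2
  have k2 : u₁ = r * u₂ - p * v₂ := by
    apply mul_left_cancel₀ hD
    linear_combination u₂ * hr - v₂ * hp + u₂ * e1 - v₂ * e3 - u₁ * e2
  have k3 : -v₂ = q * u₁ - r * v₁ := by
    apply mul_left_cancel₀ hD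
    linear_combination u₁ * hq - v₁ * hr + u₁ * e4 - v₁ * e1 + v₂ * e2
  have k4 : v₁ = q * u₂ - r * v₂ := by
    apply mul_left_cancel₀ hD
    linear_combination u₂ * hq - v₂ * hr + u₂ * e4 - v₂ * e1 - v₁ * e2
  have c1 : I * u = r * u - p * v := by
    rw [hu, hv]
    have k1 := congrArg (Int.cast : ℤ → ℂ) k1
    have k2 := congrArg (Int.cast : ℤ → ℂ) k2
    push_cast at k1 k2
    linear_combination k1 + I * k2 + (u₂ : ℂ) * I_mul_I
  have c2 : I * v = q * u - r * v := by
    rw [hu, hv]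
    have k1 := congrArg (Int.cast : ℤ → ℂ) k3
    have k2 := congrArg (Int.cast : ℤ → ℂ) k4
    push_cast at k1 k2
    linear_combination k1 + I * k2 + (v₂ : ℂ) * I_mul_I
  have i2 : ∀ z ∈ Γ₂, I * z ∈ Γ₂ := by
    intro z hz
    obtain ⟨a, b, rfl⟩ := (m2 z).1 hz
    refine (m2 _).2 ⟨a * r + b * q, -(a * p) - b * r, ?_⟩
    push_cast
    linear_combination (a : ℂ) * c1 + (b : ℂ) * c2
  ext g
  constructor
  · rintro ⟨hg, hs, h0, him, σ, hσ⟩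
    obtain ⟨a, ha, hcase⟩ := aux_isom g hg hs h0
    have ha1 : a ∈ Γ₁ := by
      have h1 : (1 : ℂ) ∈ Γ₁ := (m1 1).2 ⟨1, 0, by simp⟩
      have : g 1 ∈ (Γ₁ : Set ℂ) := him ▸ Set.mem_image_of_mem g h1
      rcases hcase with h | h <;> simpa [h] using this
    obtain ⟨m, n, hmn⟩ := (m1 a).1 ha1
    obtain ⟨k, hk⟩ := aux_unit a m n hmn ha
    rcases hcase with h | h
    · refine ⟨k, ?_⟩
      funext z
      rw [h, hk]
    · exfalso
      have hu1 : u ∈ Γ₁ := (m1 u).2 ⟨u₁, u₂, hu⟩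
      have hu2' : u ∈ Γ₂ := (m2 u).2 ⟨1, 0, by simp⟩
      have s1 := hσ u hu1
      have s0 := hσ 0 Γ₁.zero_mem
      have hq : (QuotientAddGroup.mk u : ℂ ⧸ Γ₂) = QuotientAddGroup.mk 0 := by
        rw [QuotientAddGroup.eq]
        simpa using hu2'
      rw [hq, ← s0, h0, QuotientAddGroup.eq] at s1
      have s2 : g u ∈ Γ₂ := by simpa using s1
      have s3 : starRingEnd ℂ u ∈ Γ₂ := by
        have := aux_pow Γ₂ i2 (3 * (k : ℕ)) _ s2
        rw [h, hk, ← mul_assoc, mul_comm (I ^ _), aux_inv, one_mul] at this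
        exact this
      obtain ⟨x, y, hxy⟩ := (m2 _).1 s3
      have f1 := congrArg Complex.re hxy
      have f2 := congrArg Complex.im hxy
      simp [hu, hv] at f1 f2
      norm_cast at f1 f2
      apply hndvd.2.2
      refine ⟨-x, ?_⟩
      linear_combination v₂ * f1 - v₁ * f2 - x * e2 - e5
  · rintro ⟨k, rfl⟩
    refine ⟨?_, ?_, by simp, aux_mem_s8 Γ₁ k i1,
      aux_color Γ₁ Γ₂ _ _ (aux_inv k) (aux_pow Γ₂ i2 k) (aux_pow Γ₂ i2 _)⟩
    · refine Isometry.of_dist_eq fun x y => ?_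
      rw [dist_eq_norm, dist_eq_norm, ← mul_sub, norm_mul]
      simp
    · intro z
      refine ⟨I ^ (3 * (k : ℕ)) * z, ?_⟩
      simp only
      rw [← mul_assoc, aux_inv, one_mul]
end

section
/- Let Γ₁ = ℤ[i] and Γ₂ = ⟨u, v⟩_ℤ for ℝ-linearly independent u, v ∈ ℤ[i]. If Im(u·conj(v)) divides each of Im(u²), Im(v²), and Im(uv), but divides none of N(u), N(v), and Re(u·conj(v)), then the point group of the color group H of the coloring of Γ₁ determined by Γ₂ is the group of order 4 consisting of the identity, the 180°-rotation z ↦ −z, the reflection z ↦ conj(z), and the reflection z ↦ −conj(z) (so the color group is of type pmm). -/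
open Complex

theorem aux_color_s9 (Γ₁ Γ₂ : AddSubgroup ℂ) (e : ℂ ≃+ ℂ) (he : Γ₂.map (e : ℂ →+ ℂ) = Γ₂) :
    IsColorSymmetry Γ₁ Γ₂ e :=
  ⟨(QuotientAddGroup.congr Γ₂ Γ₂ e he).toEquiv, fun ℓ _ => rfl⟩

theorem aux_mem_s9 (Γ₁ Γ₂ : AddSubgroup ℂ) (g : ℂ → ℂ) (g' : ℂ ≃+ ℂ) (hgg : ∀ z, g z = g' z)
    (hiso : ∀ z, ‖g z‖ = ‖z‖) (hinv : ∀ z, g (g z) = z)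
    (h1 : ∀ z ∈ Γ₁, g z ∈ Γ₁) (h2 : ∀ z ∈ Γ₂, g z ∈ Γ₂) :
    g ∈ pointColorGroup Γ₁ Γ₂ := by
  have hfun : g = g' := funext hgg
  refine ⟨?_, fun z => ⟨g z, hinv z⟩, ?_, ?_, ?_⟩
  · refine Isometry.of_dist_eq fun x y => ?_
    rw [dist_eq_norm, dist_eq_norm, ← hiso (x - y), hgg, hgg, hgg, map_sub]
  · rw [hgg, map_zero]
  · ext z
    constructor
    · rintro ⟨w, hw, rfl⟩
      exact h1 w hw
    · intro hz
      exact ⟨g z, h1 z hz, hinv z⟩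
  · rw [hfun]
    apply aux_color_s9
    ext z
    constructor
    · rintro ⟨w, hw, rfl⟩
      have := h2 w hw
      rw [hgg] at this
      exact this
    · intro hz
      refine ⟨g z, h2 z hz, ?_⟩
      have := hinv z
      rw [hgg (g z)] at this
      exact this

theorem aux_gauss (z : ℂ) :
    z ∈ AddSubgroup.closure ({1, I} : Set ℂ) ↔ ∃ a b : ℤ, z = a + b * I := by
  rw [AddSubgroup.mem_closure_pair]
  simp [eq_comm]

theorem aux_stable (u v : ℂ) (Γ₂ : AddSubgroup ℂ)
    (hΓ₂ : Γ₂ = AddSubgroup.closure ({u, v} : Set ℂ))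
    (hu : starRingEnd ℂ u ∈ Γ₂) (hv : starRingEnd ℂ v ∈ Γ₂) (z : ℂ) (hz : z ∈ Γ₂) :
    starRingEnd ℂ z ∈ Γ₂ := by
  rw [hΓ₂, AddSubgroup.mem_closure_pair] at hz
  obtain ⟨m, n, rfl⟩ := hz
  rw [map_add, map_zsmul, map_zsmul]
  exact add_mem (zsmul_mem hu m) (zsmul_mem hv n)

/-- Case (c) for the square lattice `Γ₁ = ℤ[i]`: if `Im(u·conj v)` divides all of
`Im(u²)`, `Im(v²)`, `Im(uv)` but none of `N(u)`, `N(v)`, `Re(u·conj v)`, then the point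
group of the color group of the coloring of `Γ₁` determined by `Γ₂ = ⟨u, v⟩_ℤ` consists
of the identity, the `180°`-rotation, and the reflections `z ↦ conj z` and
`z ↦ -conj z` (type `pmm`). -/
theorem pointColorGroup_pmm (u v : ℂ) (u₁ u₂ v₁ v₂ : ℤ)
    (hu : u = u₁ + u₂ * I) (hv : v = v₁ + v₂ * I)
    (hind : LinearIndependent ℝ ![u, v])
    (Γ₁ Γ₂ : AddSubgroup ℂ)
    (hΓ₁ : Γ₁ = AddSubgroup.closure ({1, I} : Set ℂ))
    (hΓ₂ : Γ₂ = AddSubgroup.closure ({u, v} : Set ℂ))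
    (ruv iuv nu nv ru2 iu2 rv2 iv2 rmuv imuv : ℤ)
    (hruv : u * starRingEnd ℂ v = ruv + iuv * I)
    (hnu : u * starRingEnd ℂ u = (nu : ℂ))
    (hnv : v * starRingEnd ℂ v = (nv : ℂ))
    (hu2 : u ^ 2 = ru2 + iu2 * I)
    (hv2 : v ^ 2 = rv2 + iv2 * I)
    (hmuv : u * v = rmuv + imuv * I)
    (hdvd : iuv ∣ iu2 ∧ iuv ∣ iv2 ∧ iuv ∣ imuv)
    (hndvd : ¬ iuv ∣ nu ∧ ¬ iuv ∣ nv ∧ ¬ iuv ∣ ruv) :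
    pointColorGroup Γ₁ Γ₂ =
      {fun z => z, fun z => -z, fun z => starRingEnd ℂ z, fun z => -starRingEnd ℂ z} := by
  have hconju : starRingEnd ℂ u = u₁ - u₂ * I := by
    rw [hu]; simp [sub_eq_add_neg]
  have hconjv : starRingEnd ℂ v = v₁ - v₂ * I := by
    rw [hv]; simp [sub_eq_add_neg]
  have eiuv : iuv = u₂ * v₁ - u₁ * v₂ := by
    rw [hconjv, hu] at hruv
    have := congrArg Complex.im hruv
    simp at this
    have h : (iuv : ℝ) = u₂ * v₁ - u₁ * v₂ := by linarith
    exact_mod_cast h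
  have enu : nu = u₁ * u₁ + u₂ * u₂ := by
    rw [hconju, hu] at hnu
    have := congrArg Complex.re hnu
    simp at this
    have h : (nu : ℝ) = u₁ * u₁ + u₂ * u₂ := by linarith
    exact_mod_cast h
  have env : nv = v₁ * v₁ + v₂ * v₂ := by
    rw [hconjv, hv] at hnv
    have := congrArg Complex.re hnv
    simp at this
    have h : (nv : ℝ) = v₁ * v₁ + v₂ * v₂ := by linarith
    exact_mod_cast h
  have eiu2 : iu2 = 2 * u₁ * u₂ := by
    rw [hu, sq] at hu2
    have := congrArg Complex.im hu2
    simp at this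
    have h : (iu2 : ℝ) = 2 * u₁ * u₂ := by linarith
    exact_mod_cast h
  have eiv2 : iv2 = 2 * v₁ * v₂ := by
    rw [hv, sq] at hv2
    have := congrArg Complex.im hv2
    simp at this
    have h : (iv2 : ℝ) = 2 * v₁ * v₂ := by linarith
    exact_mod_cast h
  have eimuv : imuv = u₁ * v₂ + u₂ * v₁ := by
    rw [hu, hv] at hmuv
    have := congrArg Complex.im hmuv
    simp at this
    have h : (imuv : ℝ) = u₁ * v₂ + u₂ * v₁ := by linarith
    exact_mod_cast h
  obtain ⟨⟨p, hp⟩, ⟨q, hq⟩, ⟨r, hr⟩⟩ := hdvd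
  obtain ⟨hn1, hn2, hn3⟩ := hndvd
  have h0 : iuv ≠ 0 := by
    intro h0
    have := (LinearIndependent.pair_iff.1 hind) (nv : ℝ) (-(ruv : ℝ)) (by
      have h3 : u * starRingEnd ℂ v = ruv := by rw [hruv, h0]; simp
      have : (nv : ℂ) * u - ruv * v = 0 := by
        rw [← hnv, ← h3]; ring
      simp only [Complex.real_smul]
      push_cast
      linear_combination this)
    have h4 : nv = 0 := by exact_mod_cast this.1
    exact hn2 (h4 ▸ dvd_zero _)
  have huΓ : u ∈ Γ₂ := hΓ₂ ▸ AddSubgroup.subset_closure (by simp)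
  have hvΓ : v ∈ Γ₂ := hΓ₂ ▸ AddSubgroup.subset_closure (by simp)
  have hcu : starRingEnd ℂ u ∈ Γ₂ := by
    have e1 : u₁ = -r * u₁ + p * v₁ := by
      apply mul_left_cancel₀ h0
      linear_combination u₁ * (eiuv + eimuv - hr) - v₁ * (eiu2 - hp)
    have e2 : -u₂ = -r * u₂ + p * v₂ := by
      apply mul_left_cancel₀ h0
      linear_combination u₂ * (-eiuv + eimuv - hr) - v₂ * (eiu2 - hp)
    have : starRingEnd ℂ u = (-r) • u + p • v := by
      have e1' : (u₁ : ℂ) = -r * u₁ + p * v₁ := by exact_mod_cast e1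
      have e2' : -(u₂ : ℂ) = -r * u₂ + p * v₂ := by exact_mod_cast e2
      rw [hconju, hu, hv, zsmul_eq_mul, zsmul_eq_mul]
      push_cast
      linear_combination e1' + I * e2'
    rw [this]
    exact add_mem (zsmul_mem huΓ _) (zsmul_mem hvΓ _)
  have hcv : starRingEnd ℂ v ∈ Γ₂ := by
    have e1 : v₁ = -q * u₁ + r * v₁ := by
      apply mul_left_cancel₀ h0
      linear_combination v₁ * (eiuv - eimuv + hr) + u₁ * (eiv2 - hq)
    have e2 : -v₂ = -q * u₂ + r * v₂ := by
      apply mul_left_cancel₀ h0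
      linear_combination v₂ * (-eiuv - eimuv + hr) + u₂ * (eiv2 - hq)
    have : starRingEnd ℂ v = (-q) • u + r • v := by
      have e1' : (v₁ : ℂ) = -q * u₁ + r * v₁ := by exact_mod_cast e1
      have e2' : -(v₂ : ℂ) = -q * u₂ + r * v₂ := by exact_mod_cast e2
      rw [hconjv, hu, hv, zsmul_eq_mul, zsmul_eq_mul]
      push_cast
      linear_combination e1' + I * e2'
    rw [this]
    exact add_mem (zsmul_mem huΓ _) (zsmul_mem hvΓ _)
  have hstab := aux_stable u v Γ₂ hΓ₂ hcu hcv
  have hstab1 : ∀ z ∈ Γ₁, starRingEnd ℂ z ∈ Γ₁ := by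
    refine aux_stable 1 I Γ₁ hΓ₁ ?_ ?_
    · rw [map_one, hΓ₁]; exact AddSubgroup.subset_closure (by simp)
    · rw [Complex.conj_I, hΓ₁]; exact neg_mem (AddSubgroup.subset_closure (by simp))
  have hsub : ∀ z ∈ Γ₂, z ∈ Γ₁ := by
    intro z hz
    rw [hΓ₂, AddSubgroup.mem_closure_pair] at hz
    obtain ⟨m, n, rfl⟩ := hz
    refine add_mem (zsmul_mem ?_ m) (zsmul_mem ?_ n)
    · rw [hΓ₁, aux_gauss]; exact ⟨_, _, hu⟩
    · rw [hΓ₁, aux_gauss]; exact ⟨_, _, hv⟩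
  have hIu : I * u ∉ Γ₂ := by
    intro h
    rw [hΓ₂, AddSubgroup.mem_closure_pair] at h
    obtain ⟨m, n, h⟩ := h
    rw [hu, hv] at h
    have h1 := congrArg Complex.re h
    have h2 := congrArg Complex.im h
    simp at h1 h2
    have h1' : m * u₁ + n * v₁ = -u₂ := by exact_mod_cast h1
    have h2' : m * u₂ + n * v₂ = u₁ := by exact_mod_cast h2
    apply hn1
    refine ⟨-n, ?_⟩
    rw [enu, eiuv]
    linear_combination u₂ * h1' - u₁ * h2'
  ext g
  constructor
  · rintro ⟨hg, hsurj, hg0, himg, σ, hσ⟩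
    have hpres : ∀ z ∈ Γ₂, g z ∈ Γ₂ := by
      intro z hz
      have e0 := hσ 0 (zero_mem _)
      have ez := hσ z (hsub z hz)
      rw [(QuotientAddGroup.eq_zero_iff z).2 hz] at ez
      rw [hg0] at e0
      have : (QuotientAddGroup.mk (g z) : ℂ ⧸ Γ₂) = 0 := by
        rw [ez]; exact e0.symm
      exact (QuotientAddGroup.eq_zero_iff _).1 this
    let E : ℂ ≃ᵢ ℂ := ⟨Equiv.ofBijective g ⟨hg.injective, hsurj⟩, hg⟩
    have hE0 : E 0 = 0 := hg0
    obtain ⟨a, ha⟩ := linear_isometry_complex (E.toRealLinearIsometryEquivOfMapZero hE0)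
    have hform : (∀ z, g z = a * z) ∨ (∀ z, g z = a * starRingEnd ℂ z) := by
      rcases ha with ha | ha
      · left; intro z
        have := congrArg (fun f : ℂ ≃ₗᵢ[ℝ] ℂ => f z) ha
        exact this
      · right; intro z
        have := congrArg (fun f : ℂ ≃ₗᵢ[ℝ] ℂ => f z) ha
        exact this
    have hau : (a : ℂ) * u ∈ Γ₂ := by
      rcases hform with h | h
      · rw [← h]; exact hpres u huΓ
      · have := hpres _ hcu
        rw [h, Complex.conj_conj] at this
        exact this
    have ha1 : (a : ℂ) ∈ Γ₁ := by
      have h1 : g 1 = a := by rcases hform with h | h <;> simp [h]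
      rw [← h1]
      have : g 1 ∈ g '' (Γ₁ : Set ℂ) :=
        ⟨1, by rw [hΓ₁]; exact AddSubgroup.subset_closure (by simp), rfl⟩
      rw [himg] at this
      exact this
    rw [hΓ₁, aux_gauss] at ha1
    obtain ⟨x, y, hxy⟩ := ha1
    have hnorm : x * x + y * y = 1 := by
      have h1 : Complex.normSq (a : ℂ) = 1 := by
        rw [Complex.normSq_eq_norm_sq, Circle.norm_coe]; norm_num
      rw [hxy, Complex.normSq_apply] at h1
      simp at h1
      exact_mod_cast h1
    have hy : y = 0 := by
      by_contra hy
      have hx : x = 0 := by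
        have : 0 < y * y := mul_self_pos.2 hy
        nlinarith
      have : y = 1 ∨ y = -1 := by
        apply mul_self_eq_one_iff.1; rw [hx] at hnorm; linarith
      rw [hxy, hx] at hau
      rcases this with h | h
      · rw [h] at hau; apply hIu; simpa using hau
      · rw [h] at hau; apply hIu; simpa using hau
    have hx : x = 1 ∨ x = -1 := by
      apply mul_self_eq_one_iff.1; rw [hy] at hnorm; linarith
    rw [hxy, hy] at hform
    simp only [Set.mem_insert_iff, Set.mem_singleton_iff]
    rcases hx with hx | hx <;> rcases hform with h | h <;> rw [hx] at h
    · left; funext z; simp [h]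
    · right; right; left; funext z; simp [h]
    · right; left; funext z; simp [h]
    · right; right; right; funext z; simp [h]
  · simp only [Set.mem_insert_iff, Set.mem_singleton_iff]
    rintro (rfl | rfl | rfl | rfl)
    · exact aux_mem_s9 _ _ _ (AddEquiv.refl ℂ) (fun _ => rfl) (fun _ => rfl) (fun _ => rfl)
        (fun _ h => h) (fun _ h => h)
    · exact aux_mem_s9 _ _ _ (AddEquiv.neg ℂ) (fun _ => rfl) (fun z => by simp) (fun z => by simp)
        (fun _ h => neg_mem h) (fun _ h => neg_mem h)
    · exact aux_mem_s9 _ _ _ (starRingAut (R := ℂ)).toAddEquiv (fun _ => rfl) (fun z => by simp)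
        (fun z => by simp) hstab1 hstab
    · exact aux_mem_s9 _ _ _ ((starRingAut (R := ℂ)).toAddEquiv.trans (AddEquiv.neg ℂ))
        (fun _ => rfl) (fun z => by simp)
        (fun z => by simp) (fun z h => neg_mem (hstab1 z h)) (fun z h => neg_mem (hstab z h))
end

section
/- Let Γ₁ = ℤ[i] and Γ₂ = ⟨u, v⟩_ℤ for ℝ-linearly independent u, v ∈ ℤ[i]. Suppose none of the following holds: (i) Im(u·conj(v)) divides all of N(u), N(v), Re(u·conj(v)); (ii) Im(u·conj(v)) divides all of Im(u²), Im(v²), Im(uv); (iii) Im(u·conj(v)) divides all of Re(u²), Re(v²), Re(uv). Then the point group of the color group H of the coloring of Γ₁ determined by Γ₂ is {identity, z ↦ −z} of order 2 (so the color group is of type p2). -/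
open Complex

theorem aux_parts (w : ℂ) (a b : ℤ) (h : w = a + b * I) : w.re = a ∧ w.im = b := by
  subst h; simp

theorem aux_form (g : ℂ → ℂ) (hg : Isometry g) (hs : Function.Surjective g) (h0 : g 0 = 0) :
    (∀ z, g z = g 1 * z) ∨ (∀ z, g z = g 1 * starRingEnd ℂ z) := by
  let e : ℂ ≃ᵢ ℂ := ⟨Equiv.ofBijective g ⟨hg.injective, hs⟩, hg⟩
  let f : ℂ ≃ₗᵢ[ℝ] ℂ := e.toRealLinearIsometryEquivOfMapZero h0
  have hf : ∀ z, g z = f z := fun z => rfl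
  obtain ⟨a, h | h⟩ := linear_isometry_complex f
  · left
    intro z
    rw [hf, hf, h]; simp
  · right
    intro z
    rw [hf, hf, h]; simp

theorem aux_mem_s11 (a b : ℂ) (a₁ a₂ b₁ b₂ m n : ℤ) (ha : a = a₁ + a₂ * I) (hb : b = b₁ + b₂ * I)
    (w : ℂ) (hw : w.re = m ∧ w.im = n)
    (h : w ∈ AddSubgroup.closure ({a, b} : Set ℂ)) :
    ∃ p q : ℤ, m = p * a₁ + q * b₁ ∧ n = p * a₂ + q * b₂ := by
  obtain ⟨p, q, h⟩ := AddSubgroup.mem_closure_pair.1 h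
  refine ⟨p, q, ?_, ?_⟩
  · have := congrArg Complex.re h
    rw [hw.1] at this
    simp [ha, hb] at this
    exact_mod_cast this.symm
  · have := congrArg Complex.im h
    rw [hw.2] at this
    simp [ha, hb] at this
    exact_mod_cast this.symm

theorem aux_unit_s11 (m n : ℤ) (h : m * m + n * n = 1) :
    (m = 1 ∧ n = 0) ∨ (m = -1 ∧ n = 0) ∨ (m = 0 ∧ n = 1) ∨ (m = 0 ∧ n = -1) := by
  have h1 : m ≤ 1 := by nlinarith
  have h2 : -1 ≤ m := by nlinarith
  have h3 : n ≤ 1 := by nlinarith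
  have h4 : -1 ≤ n := by nlinarith
  interval_cases m <;> interval_cases n <;> simp_all

/-- Case (e) for the square lattice `Γ₁ = ℤ[i]`: if none of the divisibility criteria
(a)–(d) holds, then the point group of the color group of the coloring of `Γ₁`
determined by `Γ₂ = ⟨u, v⟩_ℤ` is `{id, z ↦ -z}` of order `2` (type `p2`). -/
theorem pointColorGroup_p2 (u v : ℂ) (u₁ u₂ v₁ v₂ : ℤ)
    (hu : u = u₁ + u₂ * I) (hv : v = v₁ + v₂ * I)
    (hind : LinearIndependent ℝ ![u, v])
    (Γ₁ Γ₂ : AddSubgroup ℂ)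
    (hΓ₁ : Γ₁ = AddSubgroup.closure ({1, I} : Set ℂ))
    (hΓ₂ : Γ₂ = AddSubgroup.closure ({u, v} : Set ℂ))
    (ruv iuv nu nv ru2 iu2 rv2 iv2 rmuv imuv : ℤ)
    (hruv : u * starRingEnd ℂ v = ruv + iuv * I)
    (hnu : u * starRingEnd ℂ u = (nu : ℂ))
    (hnv : v * starRingEnd ℂ v = (nv : ℂ))
    (hu2 : u ^ 2 = ru2 + iu2 * I)
    (hv2 : v ^ 2 = rv2 + iv2 * I)
    (hmuv : u * v = rmuv + imuv * I)
    (h1 : ¬ (iuv ∣ nu ∧ iuv ∣ nv ∧ iuv ∣ ruv))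
    (h2 : ¬ (iuv ∣ iu2 ∧ iuv ∣ iv2 ∧ iuv ∣ imuv))
    (h3 : ¬ (iuv ∣ ru2 ∧ iuv ∣ rv2 ∧ iuv ∣ rmuv)) :
    pointColorGroup Γ₁ Γ₂ = {fun z => z, fun z => -z} := by
  have hiuv : iuv = u₂ * v₁ - u₁ * v₂ := by
    have := congrArg Complex.im hruv
    simp [hu, hv] at this
    have h' : (iuv : ℝ) = ((u₂ * v₁ - u₁ * v₂ : ℤ) : ℝ) := by push_cast; linarith
    exact_mod_cast h'
  have eruv : ruv = u₁ * v₁ + u₂ * v₂ := by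
    have := congrArg Complex.re hruv
    simp [hu, hv] at this
    have h' : (ruv : ℝ) = ((u₁ * v₁ + u₂ * v₂ : ℤ) : ℝ) := by push_cast; linarith
    exact_mod_cast h'
  have enu : nu = u₁ * u₁ + u₂ * u₂ := by
    have := congrArg Complex.re hnu
    simp [hu] at this
    have h' : (nu : ℝ) = ((u₁ * u₁ + u₂ * u₂ : ℤ) : ℝ) := by push_cast; linarith
    exact_mod_cast h'
  have env : nv = v₁ * v₁ + v₂ * v₂ := by
    have := congrArg Complex.re hnv
    simp [hv] at this
    have h' : (nv : ℝ) = ((v₁ * v₁ + v₂ * v₂ : ℤ) : ℝ) := by push_cast; linarith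
    exact_mod_cast h'
  have eru2 : ru2 = u₁ * u₁ - u₂ * u₂ := by
    have := congrArg Complex.re hu2
    simp [hu, pow_two] at this
    have h' : (ru2 : ℝ) = ((u₁ * u₁ - u₂ * u₂ : ℤ) : ℝ) := by push_cast; linarith
    exact_mod_cast h'
  have eiu2 : iu2 = 2 * (u₁ * u₂) := by
    have := congrArg Complex.im hu2
    simp [hu, pow_two] at this
    have h' : (iu2 : ℝ) = ((2 * (u₁ * u₂) : ℤ) : ℝ) := by push_cast; linarith
    exact_mod_cast h'
  have erv2 : rv2 = v₁ * v₁ - v₂ * v₂ := by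
    have := congrArg Complex.re hv2
    simp [hv, pow_two] at this
    have h' : (rv2 : ℝ) = ((v₁ * v₁ - v₂ * v₂ : ℤ) : ℝ) := by push_cast; linarith
    exact_mod_cast h'
  have eiv2 : iv2 = 2 * (v₁ * v₂) := by
    have := congrArg Complex.im hv2
    simp [hv, pow_two] at this
    have h' : (iv2 : ℝ) = ((2 * (v₁ * v₂) : ℤ) : ℝ) := by push_cast; linarith
    exact_mod_cast h'
  have ermuv : rmuv = u₁ * v₁ - u₂ * v₂ := by
    have := congrArg Complex.re hmuv
    simp [hu, hv] at this
    have h' : (rmuv : ℝ) = ((u₁ * v₁ - u₂ * v₂ : ℤ) : ℝ) := by push_cast; linarith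
    exact_mod_cast h'
  have eimuv : imuv = u₁ * v₂ + u₂ * v₁ := by
    have := congrArg Complex.im hmuv
    simp [hu, hv] at this
    have h' : (imuv : ℝ) = ((u₁ * v₂ + u₂ * v₁ : ℤ) : ℝ) := by push_cast; linarith
    exact_mod_cast h'
  have huΓ : u ∈ Γ₁ := by
    rw [hΓ₁, AddSubgroup.mem_closure_pair]
    exact ⟨u₁, u₂, by simp [hu]⟩
  have hvΓ : v ∈ Γ₁ := by
    rw [hΓ₁, AddSubgroup.mem_closure_pair]
    exact ⟨v₁, v₂, by simp [hv]⟩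
  have hu' := aux_parts u _ _ hu
  have hv' := aux_parts v _ _ hv
  ext g
  constructor
  · rintro ⟨hg, hs, h0, him, σ, hσ⟩
    have key : ∀ w ∈ Γ₁, w ∈ Γ₂ → g w ∈ Γ₂ := by
      intro w hw hw2
      have e1 := hσ w hw
      have e2 := hσ 0 Γ₁.zero_mem
      rw [(QuotientAddGroup.eq_zero_iff w).2 hw2] at e1
      rw [h0] at e2
      rw [← QuotientAddGroup.eq_zero_iff, e1]
      exact e2.symm
    have gu : g u ∈ Γ₂ := key u huΓ (hΓ₂ ▸ AddSubgroup.subset_closure (by simp))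
    have gv : g v ∈ Γ₂ := key v hvΓ (hΓ₂ ▸ AddSubgroup.subset_closure (by simp))
    rw [hΓ₂] at gu gv
    have g1 : g 1 ∈ Γ₁ := by
      have : g 1 ∈ g '' (Γ₁ : Set ℂ) :=
        ⟨1, hΓ₁ ▸ AddSubgroup.subset_closure (by simp), rfl⟩
      rw [him] at this
      exact this
    rw [hΓ₁] at g1
    obtain ⟨m, n, hmn⟩ := AddSubgroup.mem_closure_pair.1 g1
    have hmn : g 1 = m + n * I := by rw [← hmn]; simp
    have hn1 : m * m + n * n = 1 := by
      have hd := hg.dist_eq 1 0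
      rw [h0, dist_zero_right, dist_zero_right, norm_one] at hd
      have h2 : Complex.normSq (g 1) = 1 := by rw [Complex.normSq_eq_norm_sq, hd]; norm_num
      rw [hmn] at h2
      simp [Complex.normSq_apply] at h2
      exact_mod_cast h2
    have hr := aux_parts _ _ _ hmn
    rcases aux_form g hg hs h0 with hf | hf
    · obtain ⟨p, q, a1, a2⟩ := aux_mem_s11 u v _ _ _ _ (m * u₁ - n * u₂) (m * u₂ + n * u₁) hu hv (g u)
        (by rw [hf u]; simp [hr, hu']) gu
      obtain ⟨r, s, b1, b2⟩ := aux_mem_s11 u v _ _ _ _ (m * v₁ - n * v₂) (m * v₂ + n * v₁) hu hv (g v)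
        (by rw [hf v]; simp [hr, hv']) gv
      rcases aux_unit_s11 m n hn1 with ⟨rfl, rfl⟩ | ⟨rfl, rfl⟩ | ⟨rfl, rfl⟩ | ⟨rfl, rfl⟩
      · left; funext z; rw [hf z, hmn]; simp
      · right; rw [Set.mem_singleton_iff]; funext z; rw [hf z, hmn]; simp
      · exfalso; apply h1; subst_vars
        refine ⟨⟨-q, ?_⟩, ⟨r, ?_⟩, ⟨p, ?_⟩⟩ <;> grind
      · exfalso; apply h1; subst_vars
        refine ⟨⟨q, ?_⟩, ⟨-r, ?_⟩, ⟨-p, ?_⟩⟩ <;> grind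
    · exfalso
      obtain ⟨p, q, a1, a2⟩ := aux_mem_s11 u v _ _ _ _ (m * u₁ + n * u₂) (n * u₁ - m * u₂) hu hv (g u)
        (by rw [hf u]; simp [hr, hu']; ring) gu
      obtain ⟨r, s, b1, b2⟩ := aux_mem_s11 u v _ _ _ _ (m * v₁ + n * v₂) (n * v₁ - m * v₂) hu hv (g v)
        (by rw [hf v]; simp [hr, hv']; ring) gv
      rcases aux_unit_s11 m n hn1 with ⟨rfl, rfl⟩ | ⟨rfl, rfl⟩ | ⟨rfl, rfl⟩ | ⟨rfl, rfl⟩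
      · apply h2; subst_vars
        refine ⟨⟨q, ?_⟩, ⟨-r, ?_⟩, ⟨-p, ?_⟩⟩ <;> grind
      · apply h2; subst_vars
        refine ⟨⟨-q, ?_⟩, ⟨r, ?_⟩, ⟨p, ?_⟩⟩ <;> grind
      · apply h3; subst_vars
        refine ⟨⟨-q, ?_⟩, ⟨r, ?_⟩, ⟨p, ?_⟩⟩ <;> grind
      · apply h3; subst_vars
        refine ⟨⟨q, ?_⟩, ⟨-r, ?_⟩, ⟨-p, ?_⟩⟩ <;> grind
  · rintro (rfl | rfl)
    · refine ⟨isometry_id, Function.surjective_id, rfl, by simp, Equiv.refl _, fun _ _ => rfl⟩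
    · refine ⟨(IsometryEquiv.neg ℂ).isometry, neg_surjective, neg_zero, ?_, Equiv.neg _, fun _ _ => rfl⟩
      ext z
      simp
end

section
/- Let ξ = e^{2πi/3}, Γ₁ = ℤ[ξ] the hexagonal lattice, and Γ₂ = ⟨u, v⟩_ℤ for ℝ-linearly independent u, v ∈ ℤ[ξ]. If Im_h(u·conj(v)) divides each of N(u), N(v), Re_h(u·conj(v)), Re_h(u²), Im_h(u²), Re_h(v²), Im_h(v²), Re_h(uv), and Im_h(uv), then the point group of the color group H of the coloring of Γ₁ determined by Γ₂ is the full point group of ℤ[ξ], namely the dihedral group of order 12 generated by the 60°-rotation z ↦ e^{iπ/3}z and complex conjugation (so the color group is of type p6m and the coloring is perfect). -/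
open Complex

lemma aux_xi (ξ : ℂ) (hξ : ξ = Complex.exp (2 * (Real.pi : ℂ) * I / 3)) :
    ξ = ⟨-1/2, √3/2⟩ := by
  have h : (2 * (Real.pi : ℂ) * I / 3) = ((Real.pi - Real.pi / 3 : ℝ) : ℂ) * I := by
    push_cast; ring
  rw [hξ, h, Complex.exp_mul_I, ← Complex.ofReal_cos, ← Complex.ofReal_sin,
    Real.cos_pi_sub, Real.sin_pi_sub, Real.cos_pi_div_three, Real.sin_pi_div_three]
  apply Complex.ext <;> simp <;> norm_num

lemma aux_zeta (ζ : ℂ) (hζ : ζ = Complex.exp ((Real.pi : ℂ) * I / 3)) :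
    ζ = ⟨1/2, √3/2⟩ := by
  have h : ((Real.pi : ℂ) * I / 3) = ((Real.pi / 3 : ℝ) : ℂ) * I := by
    push_cast; ring
  rw [hζ, h, Complex.exp_mul_I, ← Complex.ofReal_cos, ← Complex.ofReal_sin,
    Real.cos_pi_div_three, Real.sin_pi_div_three]
  apply Complex.ext <;> simp

lemma aux_closure (f : ℂ →+ ℂ) (a b : ℂ)
    (ha : f a ∈ AddSubgroup.closure ({a, b} : Set ℂ))
    (hb : f b ∈ AddSubgroup.closure ({a, b} : Set ℂ)) :
    ∀ z ∈ AddSubgroup.closure ({a, b} : Set ℂ),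
      f z ∈ AddSubgroup.closure ({a, b} : Set ℂ) := by
  have : AddSubgroup.closure ({a, b} : Set ℂ) ≤
      (AddSubgroup.closure ({a, b} : Set ℂ)).comap f := by
    rw [AddSubgroup.closure_le]
    rintro x (rfl | rfl)
    · exact ha
    · exact hb
  exact this

lemma aux_mem_s12 (a b : ℂ) (m n : ℤ) :
    m * a + n * b ∈ AddSubgroup.closure ({a, b} : Set ℂ) := by
  rw [AddSubgroup.mem_closure_pair]
  exact ⟨m, n, by simp⟩

lemma aux_sym (Γ₁ Γ₂ : AddSubgroup ℂ) (f f' : ℂ →+ ℂ) (h : ∀ z, f (f' z) = z)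
    (h' : ∀ z, f' (f z) = z) (hf : ∀ z ∈ Γ₁, f z ∈ Γ₁) (hf' : ∀ z ∈ Γ₁, f' z ∈ Γ₁)
    (kf : ∀ z ∈ Γ₂, f z ∈ Γ₂) (kf' : ∀ z ∈ Γ₂, f' z ∈ Γ₂)
    (hn : ∀ z, ‖f z‖ = ‖z‖) : (f : ℂ → ℂ) ∈ pointColorGroup Γ₁ Γ₂ := by
  refine ⟨AddMonoidHomClass.isometry_of_norm f hn, fun z => ⟨f' z, h z⟩, map_zero f, ?_, ?_⟩
  · ext z
    constructor
    · rintro ⟨w, hw, rfl⟩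
      exact hf w hw
    · intro hz
      exact ⟨f' z, hf' z hz, h z⟩
  · refine ⟨⟨QuotientAddGroup.map Γ₂ Γ₂ f kf, QuotientAddGroup.map Γ₂ Γ₂ f' kf', ?_, ?_⟩, ?_⟩
    · intro x
      induction x using QuotientAddGroup.induction_on with
      | H z => exact congrArg (QuotientAddGroup.mk (s := Γ₂)) (h' z)
    · intro x
      induction x using QuotientAddGroup.induction_on with
      | H z => exact congrArg (QuotientAddGroup.mk (s := Γ₂)) (h z)
    · intro l _
      rfl

lemma aux_units (a b : ℤ) (h : a ^ 2 - a * b + b ^ 2 = 1) :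
    (a = 1 ∧ b = 0) ∨ (a = 1 ∧ b = 1) ∨ (a = 0 ∧ b = 1) ∨ (a = -1 ∧ b = 0) ∨
      (a = -1 ∧ b = -1) ∨ (a = 0 ∧ b = -1) := by
  have h1 : a ≤ 1 := by nlinarith [sq_nonneg (a - 2 * b)]
  have h2 : -1 ≤ a := by nlinarith [sq_nonneg (a - 2 * b)]
  have h3 : b ≤ 1 := by nlinarith [sq_nonneg (b - 2 * a)]
  have h4 : -1 ≤ b := by nlinarith [sq_nonneg (b - 2 * a)]
  interval_cases a <;> interval_cases b <;> simp_all

/-- Case (a) for the hexagonal lattice `Γ₁ = ℤ[ξ]`, `ξ = e^{2πi/3}`: if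
`Im_h(u·conj v)` divides all of `N(u)`, `N(v)`, `Re_h(u·conj v)`, `Re_h(u²)`,
`Im_h(u²)`, `Re_h(v²)`, `Im_h(v²)`, `Re_h(uv)`, `Im_h(uv)`, then the point group of the
color group of the coloring of `Γ₁` determined by `Γ₂ = ⟨u, v⟩_ℤ` is the full dihedral
point group of order `12` generated by the `60°`-rotation `z ↦ e^{iπ/3} z` and complex
conjugation (type `p6m`; the coloring is perfect). -/
theorem pointColorGroup_p6m (ξ ζ : ℂ)
    (hξ : ξ = Complex.exp (2 * (Real.pi : ℂ) * I / 3))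
    (hζ : ζ = Complex.exp ((Real.pi : ℂ) * I / 3))
    (u v : ℂ) (a₁ a₂ b₁ b₂ : ℤ)
    (hu : u = a₁ + a₂ * ξ) (hv : v = b₁ + b₂ * ξ)
    (hind : LinearIndependent ℝ ![u, v])
    (Γ₁ Γ₂ : AddSubgroup ℂ)
    (hΓ₁ : Γ₁ = AddSubgroup.closure ({1, ξ} : Set ℂ))
    (hΓ₂ : Γ₂ = AddSubgroup.closure ({u, v} : Set ℂ))
    (p₁ p₂ nu nv q₁ q₂ r₁ r₂ s₁ s₂ : ℤ)
    (hp : u * starRingEnd ℂ v = p₁ + p₂ * ξ)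
    (hnu : u * starRingEnd ℂ u = (nu : ℂ))
    (hnv : v * starRingEnd ℂ v = (nv : ℂ))
    (hq : u ^ 2 = q₁ + q₂ * ξ)
    (hr : v ^ 2 = r₁ + r₂ * ξ)
    (hs : u * v = s₁ + s₂ * ξ)
    (hdvd : p₂ ∣ nu ∧ p₂ ∣ nv ∧ p₂ ∣ p₁ ∧ p₂ ∣ q₁ ∧ p₂ ∣ q₂ ∧ p₂ ∣ r₁ ∧ p₂ ∣ r₂ ∧
      p₂ ∣ s₁ ∧ p₂ ∣ s₂) :
    pointColorGroup Γ₁ Γ₂ =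
      {g | ∃ k : Fin 6, g = (fun z => ζ ^ (k : ℕ) * z) ∨
        g = (fun z => ζ ^ (k : ℕ) * starRingEnd ℂ z)} := by
  have hx := aux_xi ξ hξ
  have hz := aux_zeta ζ hζ
  have h3 : √3 * √3 = (3 : ℝ) := Real.mul_self_sqrt (by norm_num)
  clear hξ hζ
  have hx2 : ξ ^ 2 = -1 - ξ := by
    rw [hx, sq]; apply Complex.ext <;> simp <;> linarith
  have hcx : starRingEnd ℂ ξ = -1 - ξ := by
    rw [hx]; apply Complex.ext <;> simp; norm_num
  have hζξ : ζ = 1 + ξ := by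
    rw [hx, hz]; apply Complex.ext <;> simp; norm_num
  have hδ : 1 + 2 * ξ ≠ 0 := by
    intro h
    have := congrArg Complex.im h
    rw [hx] at this
    simp at this
  have hz6 : ζ ^ 6 = 1 := by
    rw [hζξ]; linear_combination (ξ ^ 4 + 5 * ξ ^ 3 + 9 * ξ ^ 2 + 6 * ξ) * hx2
  have hζc : ζ * starRingEnd ℂ ζ = 1 := by
    rw [hζξ, map_add, map_one, hcx]; linear_combination -hx2
  have hzn : ‖ζ‖ = 1 := by
    have := Complex.mul_conj ζ
    rw [hζc] at this
    have h5 : Complex.normSq ζ = 1 := by exact_mod_cast this.symm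
    rw [Complex.normSq_eq_norm_sq] at h5
    nlinarith [norm_nonneg ζ]
  -- p₂ nonzero
  have hp2 : p₂ ≠ 0 := by
    rintro rfl
    have e : starRingEnd ℂ u * v = p₁ := by
      have := congrArg (starRingEnd ℂ) hp
      simpa using this
    have e1 : (nv : ℂ) * u - p₁ * v = 0 := by
      rw [← hnv]
      linear_combination v * hp
    rw [LinearIndependent.pair_iff] at hind
    have := (hind nv (-p₁) (by simp; linear_combination e1)).1
    have hnv0 : (nv : ℂ) = 0 := by exact_mod_cast this
    rw [hnv0] at hnv
    have hv0 : v = 0 := by simpa using hnv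
    have := (hind 0 1 (by simp [hv0])).2
    norm_num at this
  have hp2c : (p₂ : ℂ) ≠ 0 := by exact_mod_cast hp2
  have hD : u * starRingEnd ℂ v - starRingEnd ℂ u * v = p₂ * (1 + 2 * ξ) := by
    have := congrArg (starRingEnd ℂ) hp
    simp [hcx] at this
    linear_combination hp - this
  have key : ∀ (w : ℂ) (m1 m n1 n : ℤ), w * starRingEnd ℂ v = m1 + p₂ * m * ξ →
      w * starRingEnd ℂ u = n1 + p₂ * n * ξ → w ∈ Γ₂ := by
    intro w m1 m n1 n h1 h2
    have h1' := congrArg (starRingEnd ℂ) h1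
    have h2' := congrArg (starRingEnd ℂ) h2
    simp [hcx] at h1' h2'
    have : w = m * u + ((-n : ℤ) : ℂ) * v := by
      apply mul_left_cancel₀ (mul_ne_zero hp2c hδ)
      push_cast
      linear_combination (-w) * hD + u * h1 - u * h1' - v * h2 + v * h2'
    rw [this, hΓ₂]
    exact aux_mem_s12 _ _ _ _
  have hpc : v * starRingEnd ℂ u = (p₁ - p₂) - p₂ * ξ := by
    have := congrArg (starRingEnd ℂ) hp
    simp [hcx] at this
    linear_combination this
  have hqc := congrArg (starRingEnd ℂ) hq
  have hrc := congrArg (starRingEnd ℂ) hr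
  have hsc := congrArg (starRingEnd ℂ) hs
  simp [hcx] at hqc hrc hsc
  obtain ⟨⟨d1, rfl⟩, ⟨d2, rfl⟩, ⟨d3, rfl⟩, -, ⟨d5, rfl⟩, -, ⟨d7, rfl⟩, -, ⟨d9, rfl⟩⟩ := hdvd
  push_cast at *
  have g2ξ : ∀ z ∈ Γ₂, ξ * z ∈ Γ₂ := by
    have A : ξ * u ∈ Γ₂ := by
      refine key _ (-p₂) (d3 - 1) 0 d1 ?_ ?_
      · push_cast; linear_combination ξ * hp + p₂ * hx2
      · push_cast; linear_combination ξ * hnu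
    have B : ξ * v ∈ Γ₂ := by
      refine key _ 0 d2 p₂ d3 ?_ ?_
      · push_cast; linear_combination ξ * hnv
      · push_cast; linear_combination ξ * hpc - p₂ * hx2
    subst hΓ₂
    exact aux_closure (AddMonoidHom.mulLeft ξ) u v A B
  have g2c : ∀ z ∈ Γ₂, starRingEnd ℂ z ∈ Γ₂ := by
    have A : starRingEnd ℂ u ∈ Γ₂ := by
      refine key _ (s₁ - p₂ * d9) (-d9) (q₁ - p₂ * d5) (-d5) ?_ ?_
      · push_cast; linear_combination hsc
      · push_cast; linear_combination hqc
    have B : starRingEnd ℂ v ∈ Γ₂ := by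
      refine key _ (r₁ - p₂ * d7) (-d7) (s₁ - p₂ * d9) (-d9) ?_ ?_
      · push_cast; linear_combination hrc
      · push_cast; linear_combination hsc
    subst hΓ₂
    exact aux_closure (starRingEnd ℂ : ℂ →+* ℂ).toAddMonoidHom u v A B
  have g1ξ : ∀ z ∈ Γ₁, ξ * z ∈ Γ₁ := by
    subst hΓ₁
    refine aux_closure (AddMonoidHom.mulLeft ξ) 1 ξ ?_ ?_
    · convert aux_mem_s12 1 ξ 0 1 using 1; simp
    · convert aux_mem_s12 1 ξ (-1) (-1) using 1; simp; linear_combination hx2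
  have g1c : ∀ z ∈ Γ₁, starRingEnd ℂ z ∈ Γ₁ := by
    subst hΓ₁
    refine aux_closure (starRingEnd ℂ : ℂ →+* ℂ).toAddMonoidHom 1 ξ ?_ ?_
    · convert aux_mem_s12 1 ξ 1 0 using 1; simp
    · convert aux_mem_s12 1 ξ (-1) (-1) using 1; simp [hcx]; ring
  have gpow : ∀ Γ : AddSubgroup ℂ, (∀ z ∈ Γ, ξ * z ∈ Γ) → ∀ (k : ℕ), ∀ z ∈ Γ,
      ζ ^ k * z ∈ Γ := by
    intro Γ h k
    induction k with
    | zero => intro z hz; simpa using hz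
    | succ k ih =>
      intro z hz
      have : ζ ^ (k + 1) * z = ζ ^ k * z + ξ * (ζ ^ k * z) := by
        rw [pow_succ]; linear_combination ζ ^ k * z * hζξ
      rw [this]
      exact Γ.add_mem (ih z hz) (h _ (ih z hz))
  have hkk : ∀ k : ℕ, ζ ^ k * ζ ^ (5 * k) = 1 := by
    intro k
    rw [← pow_add, show k + 5 * k = 6 * k by ring, pow_mul, hz6, one_pow]
  have hkc : ∀ k : ℕ, ζ ^ k * (starRingEnd ℂ ζ) ^ k = 1 := by
    intro k
    rw [← mul_pow, hζc, one_pow]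
  ext g
  constructor
  · rintro ⟨hiso, hsurj, h0, him, -⟩
    have hg1 : g 1 ∈ Γ₁ := by
      have : g 1 ∈ g '' (Γ₁ : Set ℂ) := by
        refine ⟨1, ?_, rfl⟩
        rw [hΓ₁]
        exact AddSubgroup.subset_closure (by simp)
      rw [him] at this
      exact this
    let e : ℂ ≃ᵢ ℂ := ⟨Equiv.ofBijective g ⟨hiso.injective, hsurj⟩, hiso⟩
    let L : ℂ ≃ₗᵢ[ℝ] ℂ := e.toRealLinearIsometryEquivOfMapZero h0
    have hL : ∀ z, L z = g z := fun z => rfl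
    rw [hΓ₁, AddSubgroup.mem_closure_pair] at hg1
    obtain ⟨a, b, hab⟩ := hg1
    have hab' : g 1 = a + b * ξ := by rw [← hab]; simp
    have hn1 : g 1 * starRingEnd ℂ (g 1) = 1 := by
      rw [Complex.mul_conj, Complex.normSq_eq_norm_sq, ← hL, L.norm_map]; simp
    have hab1 : a ^ 2 - a * b + b ^ 2 = 1 := by
      rw [hab'] at hn1
      simp [hcx] at hn1
      have : ((a ^ 2 - a * b + b ^ 2 : ℤ) : ℂ) = 1 := by
        push_cast
        linear_combination hn1 + (b : ℂ) ^ 2 * hx2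
      exact_mod_cast this
    have hk : ∃ k : Fin 6, g 1 = ζ ^ (k : ℕ) := by
      rw [hab', hζξ]
      rcases aux_units a b hab1 with ⟨rfl, rfl⟩ | ⟨rfl, rfl⟩ | ⟨rfl, rfl⟩ | ⟨rfl, rfl⟩ |
        ⟨rfl, rfl⟩ | ⟨rfl, rfl⟩
      · exact ⟨0, by simp⟩
      · exact ⟨1, by simp⟩
      · refine ⟨2, ?_⟩
        simp; linear_combination -hx2
      · refine ⟨3, ?_⟩
        simp; linear_combination (-ξ - 2) * hx2
      · refine ⟨4, ?_⟩
        simp; linear_combination (-ξ ^ 2 - 3 * ξ - 2) * hx2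
      · refine ⟨5, ?_⟩
        simp; linear_combination (-ξ ^ 3 - 4 * ξ ^ 2 - 5 * ξ - 1) * hx2
    obtain ⟨k, hk⟩ := hk
    refine ⟨k, ?_⟩
    obtain ⟨c, hc | hc⟩ := linear_isometry_complex L
    · left
      have h1 : ∀ z, g z = c * z := fun z => by rw [← hL, hc]; rfl
      have h2 := h1 1
      rw [mul_one, hk] at h2
      funext z
      rw [h1, h2]
    · right
      have h1 : ∀ z, g z = c * starRingEnd ℂ z := fun z => by rw [← hL, hc]; rfl
      have h2 := h1 1
      rw [map_one, mul_one, hk] at h2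
      funext z
      rw [h1, h2]
  · rintro ⟨k, rfl | rfl⟩
    · refine aux_sym Γ₁ Γ₂ (AddMonoidHom.mulLeft (ζ ^ (k : ℕ)))
        (AddMonoidHom.mulLeft (ζ ^ (5 * (k : ℕ)))) ?_ ?_ (gpow _ g1ξ _) (gpow _ g1ξ _)
        (gpow _ g2ξ _) (gpow _ g2ξ _) ?_
      · intro z; simp only [AddMonoidHom.coe_mulLeft]; linear_combination z * hkk k
      · intro z; simp only [AddMonoidHom.coe_mulLeft]; linear_combination z * hkk k
      · intro z; simp [hzn]
    · have hinv : ∀ z, ζ ^ (k : ℕ) * starRingEnd ℂ (ζ ^ (k : ℕ) * starRingEnd ℂ z) = z := by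
        intro z
        simp only [map_mul, map_pow, Complex.conj_conj]
        linear_combination z * hkc k
      let f : ℂ →+ ℂ := (AddMonoidHom.mulLeft (ζ ^ (k : ℕ))).comp
        (starRingEnd ℂ : ℂ →+* ℂ).toAddMonoidHom
      have c1 : ∀ z ∈ Γ₁, f z ∈ Γ₁ := fun z hz => gpow _ g1ξ k _ (g1c z hz)
      have c2 : ∀ z ∈ Γ₂, f z ∈ Γ₂ := fun z hz => gpow _ g2ξ k _ (g2c z hz)
      refine aux_sym Γ₁ Γ₂ f f hinv hinv c1 c1 c2 c2 ?_
      intro z; simp [f, hzn]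
end

section
/- Let ξ = e^{2πi/3}, Γ₁ = ℤ[ξ] the hexagonal lattice, and Γ₂ = ⟨u, v⟩_ℤ for ℝ-linearly independent u, v ∈ ℤ[ξ]. If Im_h(u·conj(v)) divides each of N(u), N(v), and Re_h(u·conj(v)), but divides none of Im_h(u²), Im_h(v²), and Im_h(uv), then the point group of the color group H of the coloring of Γ₁ determined by Γ₂ is the cyclic group of order 6 generated by the 60°-rotation z ↦ e^{iπ/3}z (so the color group is of type p6). -/
open Complex

lemma zeta_sq_aux (ζ : ℂ) (hζ : ζ = Complex.exp ((Real.pi : ℂ) * I / 3)) :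
    ζ ^ 2 = ζ - 1 ∧ ζ.im ≠ 0 ∧ starRingEnd ℂ ζ = 1 - ζ := by
  have h : ζ = ((1 / 2 : ℝ) : ℂ) + ((Real.sqrt 3 / 2 : ℝ) : ℂ) * I := by
    rw [hζ, show (Real.pi : ℂ) * I / 3 = ((Real.pi / 3 : ℝ) : ℂ) * I by push_cast; ring,
      Complex.exp_mul_I, ← Complex.ofReal_cos, ← Complex.ofReal_sin, Real.cos_pi_div_three,
      Real.sin_pi_div_three]
  have hre : ζ.re = 1 / 2 := by rw [h]; simp
  have him : ζ.im = Real.sqrt 3 / 2 := by rw [h]; simp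
  have h3 : Real.sqrt 3 * Real.sqrt 3 = 3 := Real.mul_self_sqrt (by norm_num)
  refine ⟨?_, ?_, ?_⟩
  · apply Complex.ext
    · rw [pow_two, Complex.mul_re, Complex.sub_re, hre, him, Complex.one_re]; linarith
    · rw [pow_two, Complex.mul_im, Complex.sub_im, hre, him, Complex.one_im]; linarith
  · rw [him]; positivity
  · apply Complex.ext
    · rw [Complex.conj_re, Complex.sub_re, hre, Complex.one_re]; norm_num
    · rw [Complex.conj_im, Complex.sub_im, Complex.one_im]; ring

lemma mul_closure_aux (c x y : ℂ)
    (hx : c * x ∈ AddSubgroup.closure ({x, y} : Set ℂ))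
    (hy : c * y ∈ AddSubgroup.closure ({x, y} : Set ℂ)) (k : ℕ) (w : ℂ)
    (hw : w ∈ AddSubgroup.closure ({x, y} : Set ℂ)) :
    c ^ k * w ∈ AddSubgroup.closure ({x, y} : Set ℂ) := by
  have h1 : ∀ w ∈ AddSubgroup.closure ({x, y} : Set ℂ),
      c * w ∈ AddSubgroup.closure ({x, y} : Set ℂ) := by
    intro w hw
    obtain ⟨m, n, rfl⟩ := AddSubgroup.mem_closure_pair.1 hw
    rw [mul_add, mul_smul_comm, mul_smul_comm]
    exact add_mem (zsmul_mem hx m) (zsmul_mem hy n)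
  induction k with
  | zero => simpa using hw
  | succ k ih => rw [pow_succ', mul_assoc]; exact h1 _ ih

lemma unit_cases_aux (m n : ℤ) (h : m ^ 2 - m * n + n ^ 2 = 1) :
    (m = 1 ∧ n = 0) ∨ (m = 1 ∧ n = 1) ∨ (m = 0 ∧ n = 1) ∨ (m = -1 ∧ n = 0) ∨
    (m = -1 ∧ n = -1) ∨ (m = 0 ∧ n = -1) := by
  have h1 : m ≤ 1 := by nlinarith [sq_nonneg (m - 2 * n)]
  have h2 : -1 ≤ m := by nlinarith [sq_nonneg (m - 2 * n)]
  have h3 : n ≤ 1 := by nlinarith [sq_nonneg (n - 2 * m)]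
  have h4 : -1 ≤ n := by nlinarith [sq_nonneg (n - 2 * m)]
  interval_cases m <;> interval_cases n <;> simp_all

/-- Case (b) for the hexagonal lattice `Γ₁ = ℤ[ξ]`, `ξ = e^{2πi/3}`: if
`Im_h(u·conj v)` divides all of `N(u)`, `N(v)`, `Re_h(u·conj v)` but none of
`Im_h(u²)`, `Im_h(v²)`, `Im_h(uv)`, then the point group of the color group of the
coloring of `Γ₁` determined by `Γ₂ = ⟨u, v⟩_ℤ` is the cyclic group of order `6`
generated by the `60°`-rotation `z ↦ e^{iπ/3} z` (type `p6`). -/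
theorem pointColorGroup_p6 (ξ ζ : ℂ)
    (hξ : ξ = Complex.exp (2 * (Real.pi : ℂ) * I / 3))
    (hζ : ζ = Complex.exp ((Real.pi : ℂ) * I / 3))
    (u v : ℂ) (a₁ a₂ b₁ b₂ : ℤ)
    (hu : u = a₁ + a₂ * ξ) (hv : v = b₁ + b₂ * ξ)
    (hind : LinearIndependent ℝ ![u, v])
    (Γ₁ Γ₂ : AddSubgroup ℂ)
    (hΓ₁ : Γ₁ = AddSubgroup.closure ({1, ξ} : Set ℂ))
    (hΓ₂ : Γ₂ = AddSubgroup.closure ({u, v} : Set ℂ))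
    (p₁ p₂ nu nv q₁ q₂ r₁ r₂ s₁ s₂ : ℤ)
    (hp : u * starRingEnd ℂ v = p₁ + p₂ * ξ)
    (hnu : u * starRingEnd ℂ u = (nu : ℂ))
    (hnv : v * starRingEnd ℂ v = (nv : ℂ))
    (hq : u ^ 2 = q₁ + q₂ * ξ)
    (hr : v ^ 2 = r₁ + r₂ * ξ)
    (hs : u * v = s₁ + s₂ * ξ)
    (hdvd : p₂ ∣ nu ∧ p₂ ∣ nv ∧ p₂ ∣ p₁)
    (hndvd : ¬ p₂ ∣ q₂ ∧ ¬ p₂ ∣ r₂ ∧ ¬ p₂ ∣ s₂) :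
    pointColorGroup Γ₁ Γ₂ = {g | ∃ k : Fin 6, g = fun z => ζ ^ (k : ℕ) * z} := by
  obtain ⟨hz2, hzim, hzc⟩ := zeta_sq_aux ζ hζ
  have hξζ : ξ = ζ - 1 := by
    rw [← hz2, hξ, hζ, ← Complex.exp_nat_mul]; congr 1; push_cast; ring
  have hz6 : ζ ^ 6 = 1 := by
    linear_combination (ζ ^ 4 + ζ ^ 3 - ζ - 1) * hz2
  have hz0 : ζ ≠ 0 := by rintro rfl; simp at hzim
  have hξ2 : ξ ^ 2 = -1 - ξ := by rw [hξζ]; linear_combination hz2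
  have hξc : starRingEnd ℂ ξ = -1 - ξ := by rw [hξζ, map_sub, hzc, map_one]; ring
  have hξim : ξ.im ≠ 0 := by rw [hξζ]; simpa using hzim
  clear hξ hζ
  have huniq : ∀ a b c d : ℤ, (a : ℂ) + b * ξ = c + d * ξ → a = c ∧ b = d := by
    intro a b c d h
    have him := congrArg Complex.im h
    simp at him
    have hb : b = d := by
      rcases him with h | h
      · exact_mod_cast h
      · exact absurd h hξim
    subst hb
    exact ⟨by exact_mod_cast add_right_cancel h, rfl⟩
  have hcu := congrArg (starRingEnd ℂ) hp
  have hcq := congrArg (starRingEnd ℂ) hq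
  simp only [map_mul, map_add, map_pow, Complex.conj_conj, map_intCast, hξc] at hcu hcq
  obtain ⟨hd1, hd2, hd3⟩ := hdvd
  have hp0 : p₂ ≠ 0 := by
    rintro rfl
    rw [zero_dvd_iff] at hd1
    rw [hd1, Int.cast_zero] at hnu
    have hu0 : u = 0 := by simpa using hnu
    rw [hu0] at hq
    have := (huniq 0 0 q₁ q₂ (by rw [← hq]; simp)).2
    exact hndvd.1 (by rw [← this])
  have hp0' : (p₂ : ℂ) ≠ 0 := by exact_mod_cast hp0
  -- closure of Γ₂, Γ₁ under ζ
  have hG2 : ∀ (k : ℕ), ∀ w ∈ Γ₂, ζ ^ k * w ∈ Γ₂ := by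
    obtain ⟨α, rfl⟩ := hd1
    obtain ⟨β, rfl⟩ := hd2
    obtain ⟨γ, rfl⟩ := hd3
    push_cast at *
    intro k w hw
    rw [hΓ₂] at hw ⊢
    refine mul_closure_aux ζ u v ?_ ?_ k w hw
    · refine AddSubgroup.mem_closure_pair.2 ⟨γ, -α, ?_⟩
      simp only [zsmul_eq_mul]
      push_cast
      apply mul_left_cancel₀ hp0'
      linear_combination v * hnu - u * hcu + p₂ * u * hξζ
    · refine AddSubgroup.mem_closure_pair.2 ⟨β, 1 - γ, ?_⟩
      simp only [zsmul_eq_mul]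
      push_cast
      apply mul_left_cancel₀ hp0'
      linear_combination v * hp - u * hnv + p₂ * v * hξζ
  have hG1 : ∀ (k : ℕ), ∀ w ∈ Γ₁, ζ ^ k * w ∈ Γ₁ := by
    intro k w hw
    rw [hΓ₁] at hw ⊢
    refine mul_closure_aux ζ 1 ξ ?_ ?_ k w hw
    · refine AddSubgroup.mem_closure_pair.2 ⟨1, 1, ?_⟩
      simp only [zsmul_eq_mul]
      push_cast
      linear_combination hξζ
    · refine AddSubgroup.mem_closure_pair.2 ⟨-1, 0, ?_⟩
      simp only [zsmul_eq_mul]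
      push_cast
      linear_combination -hξ2 + ξ * hξζ
  have hinv : ∀ k : Fin 6, ∀ z : ℂ, ζ ^ (6 - (k : ℕ)) * (ζ ^ (k : ℕ) * z) = z := by
    intro k z
    rw [← mul_assoc, ← pow_add, Nat.sub_add_cancel k.2.le, hz6, one_mul]
  have hinv2 : ∀ k : Fin 6, ∀ z : ℂ, ζ ^ (k : ℕ) * (ζ ^ (6 - (k : ℕ)) * z) = z := by
    intro k z
    rw [← mul_assoc, ← pow_add, Nat.add_sub_cancel' k.2.le, hz6, one_mul]
  have hznorm : ‖ζ‖ = 1 := by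
    have : ‖ζ‖ ^ 6 = 1 := by rw [← norm_pow, hz6, norm_one]
    exact (pow_eq_one_iff_of_nonneg (norm_nonneg _) (by norm_num)).1 this
  have h1mem : (1 : ℂ) ∈ Γ₁ := by rw [hΓ₁]; exact AddSubgroup.subset_closure (by simp)
  have humem : u ∈ Γ₁ := by
    rw [hΓ₁, hu]
    exact AddSubgroup.mem_closure_pair.2 ⟨a₁, a₂, by simp⟩
  have humem2 : u ∈ Γ₂ := by rw [hΓ₂]; exact AddSubgroup.subset_closure (by simp)
  have hunit : ∀ a ∈ Γ₁, ‖a‖ = 1 → ∃ k : Fin 6, a = ζ ^ (k : ℕ) := by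
    intro a ha hn
    rw [hΓ₁] at ha
    obtain ⟨m, n, rfl⟩ := AddSubgroup.mem_closure_pair.1 ha
    have h := Complex.mul_conj' (m • (1 : ℂ) + n • ξ)
    rw [hn] at h
    simp only [zsmul_eq_mul, map_add, map_mul, map_intCast, map_one, hξc] at h ⊢
    have hmn : m ^ 2 - m * n + n ^ 2 = 1 := by
      have : ((m ^ 2 - m * n + n ^ 2 : ℤ) : ℂ) = 1 := by
        push_cast
        push_cast at h
        linear_combination h + n ^ 2 * hξ2
      exact_mod_cast this
    have hz3 : ζ ^ 3 = -1 := by linear_combination (ζ + 1) * hz2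
    rcases unit_cases_aux m n hmn with h | h | h | h | h | h <;> obtain ⟨rfl, rfl⟩ := h
    · exact ⟨0, by simp⟩
    · exact ⟨1, by simp [hξζ]⟩
    · exact ⟨2, by simp [hξζ, hz2]⟩
    · exact ⟨3, by simp [hz3]⟩
    · refine ⟨4, ?_⟩
      push_cast
      change _ = ζ ^ 4
      linear_combination -hξζ - ζ * hz3
    · refine ⟨5, ?_⟩
      push_cast
      change _ = ζ ^ 5
      linear_combination -hξζ - ζ ^ 2 * hz3 + hz2
  have hconj : starRingEnd ℂ u ∉ Γ₂ := by
    intro h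
    rw [hΓ₂] at h
    obtain ⟨m, n, hmn⟩ := AddSubgroup.mem_closure_pair.1 h
    simp only [zsmul_eq_mul] at hmn
    have := (huniq (m * nu + n * (p₁ - p₂)) (-(n * p₂)) (q₁ - q₂) (-q₂) (by
      push_cast
      linear_combination starRingEnd ℂ u * hmn + hcq - m * hnu - n * hcu)).2
    exact hndvd.1 ⟨n, by linarith⟩
  ext g
  constructor
  · rintro ⟨hiso, hsurj, hg0, him, σ, hσ⟩
    let e : ℂ ≃ᵢ ℂ := IsometryEquiv.mk (Equiv.ofBijective g ⟨hiso.injective, hsurj⟩) hiso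
    let f : ℂ ≃ₗᵢ[ℝ] ℂ := e.toRealLinearIsometryEquivOfMapZero hg0
    have hf : ∀ z, g z = f z := fun z => rfl
    have hg1 : g 1 ∈ Γ₁ := by
      have : g 1 ∈ g '' (Γ₁ : Set ℂ) := ⟨1, h1mem, rfl⟩
      rw [him] at this
      exact this
    have hgn : ‖g 1‖ = 1 := by rw [hf, f.norm_map, norm_one]
    obtain ⟨k, hk⟩ := hunit _ hg1 hgn
    have hgu : g u ∈ Γ₂ := by
      have h0 := hσ 0 Γ₁.zero_mem
      have h1 := hσ u humem
      rw [(QuotientAddGroup.eq_zero_iff u).2 humem2] at h1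
      rw [QuotientAddGroup.mk_zero, hg0, QuotientAddGroup.mk_zero] at h0
      rw [← h0] at h1
      exact (QuotientAddGroup.eq_zero_iff _).1 h1
    obtain ⟨a, ha | ha⟩ := linear_isometry_complex f
    · refine ⟨k, funext fun z => ?_⟩
      have ha1 : (a : ℂ) = ζ ^ (k : ℕ) := by rw [← hk, hf, ha]; simp
      rw [hf, ha, ← ha1]; simp
    · exfalso
      have ha1 : (a : ℂ) = ζ ^ (k : ℕ) := by rw [← hk, hf, ha]; simp
      have : g u = ζ ^ (k : ℕ) * starRingEnd ℂ u := by rw [hf, ha, ← ha1]; simp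
      rw [this] at hgu
      have := hG2 (6 - k) _ hgu
      rw [hinv] at this
      exact hconj this
  · rintro ⟨k, rfl⟩
    refine ⟨?_, fun z => ⟨_, hinv2 k z⟩, by simp, ?_, ?_⟩
    · refine Isometry.of_dist_eq fun x y => ?_
      rw [dist_eq_norm, dist_eq_norm, ← mul_sub, norm_mul, norm_pow, hznorm, one_pow, one_mul]
    · ext z
      constructor
      · rintro ⟨w, hw, rfl⟩
        exact hG1 k w hw
      · intro hz
        exact ⟨_, hG1 (6 - k) z hz, hinv2 k z⟩
    · let F : ℕ → (ℂ ⧸ Γ₂ →+ ℂ ⧸ Γ₂) := fun j =>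
        QuotientAddGroup.map Γ₂ Γ₂ (AddMonoidHom.mulLeft (ζ ^ j)) (fun w hw => hG2 j w hw)
      refine ⟨⟨F k, F (6 - k), ?_, ?_⟩, fun l _ => rfl⟩
      · intro x
        induction x using QuotientAddGroup.induction_on with
        | H z => exact congrArg QuotientAddGroup.mk (hinv k z)
      · intro x
        induction x using QuotientAddGroup.induction_on with
        | H z => exact congrArg QuotientAddGroup.mk (hinv2 k z)
end

section
/- Let ξ = e^{2πi/3}, Γ₁ = ℤ[ξ] the hexagonal lattice, and Γ₂ = ⟨u, v⟩_ℤ for ℝ-linearly independent u, v ∈ ℤ[ξ]. If Im_h(u·conj(v)) divides each of Im_h(u²), Im_h(v²), and Im_h(uv), but divides none of N(u), N(v), and Re_h(u·conj(v)), then the point group of the color group H of the coloring of Γ₁ determined by Γ₂ has order 4 and consists of the identity, the 180°-rotation z ↦ −z, and a pair {s, −s} of reflections from the point group of ℤ[ξ] (so the color group is of type cmm); in particular complex conjugation z ↦ conj(z) belongs to H. -/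
open Complex

lemma hex_xi_im (ξ : ℂ) (hξ : ξ = Complex.exp (2 * (Real.pi : ℂ) * I / 3)) :
    ξ.im ≠ 0 ∧ ξ ^ 2 = -1 - ξ ∧ starRingEnd ℂ ξ = -1 - ξ := by
  have h1 : ξ = (((-1 / 2 : ℝ) : ℂ) + ((√3 / 2 : ℝ) : ℂ) * I) := by
    have e : (2 * (Real.pi : ℂ) * I / 3) = ((Real.pi - Real.pi / 3 : ℝ) : ℂ) * I := by
      push_cast; ring
    rw [hξ, e, Complex.exp_mul_I, ← Complex.ofReal_cos, ← Complex.ofReal_sin,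
      Real.cos_pi_sub, Real.sin_pi_sub, Real.cos_pi_div_three, Real.sin_pi_div_three]
    push_cast; ring
  have h3 : √3 * √3 = (3 : ℝ) := Real.mul_self_sqrt (by norm_num)
  have h3p : 0 < √3 := Real.sqrt_pos.2 (by norm_num)
  have hre : ξ.re = -1 / 2 := by rw [h1]; simp
  have him : ξ.im = √3 / 2 := by rw [h1]; simp
  refine ⟨by rw [him]; positivity, ?_, ?_⟩
  · apply Complex.ext
    · simp [pow_two, hre, him]; nlinarith
    · simp [pow_two, hre, him]; ring
  · apply Complex.ext
    · simp [hre]; norm_num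
    · simp [him]

lemma hex_coord (ξ : ℂ) (h : ξ.im ≠ 0) (a b c d : ℤ)
    (e : (a : ℂ) + b * ξ = c + d * ξ) : a = c ∧ b = d := by
  have h2 := congrArg Complex.im e
  simp at h2
  have hb : b = d := by
    rcases h2 with h2 | h2
    · exact h2
    · exact absurd h2 h
  subst hb
  refine ⟨?_, rfl⟩
  have := add_right_cancel e
  exact_mod_cast this

lemma hex_mem (Γ : AddSubgroup ℂ) (x y : ℂ) (h : Γ = AddSubgroup.closure ({x, y} : Set ℂ))
    (z : ℂ) : z ∈ Γ ↔ ∃ m n : ℤ, z = m * x + n * y := by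
  rw [h, AddSubgroup.mem_closure_pair]
  simp [eq_comm]

lemma colorSymm_of (Γ₁ Γ₂ : AddSubgroup ℂ) (e : ℂ ≃+ ℂ)
    (h : ∀ z, e z ∈ Γ₂ ↔ z ∈ Γ₂) : IsColorSymmetry Γ₁ Γ₂ e := by
  have hm : Γ₂.map (e : ℂ →+ ℂ) = Γ₂ := by
    ext z
    constructor
    · rintro ⟨w, hw, rfl⟩
      exact (h w).2 hw
    · intro hz
      exact ⟨e.symm z, (h _).1 (by simpa using hz), by simp⟩
  exact ⟨(QuotientAddGroup.congr Γ₂ Γ₂ e hm).toEquiv, fun ℓ _ => rfl⟩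

lemma colorSymm_mem (Γ₁ Γ₂ : AddSubgroup ℂ) (hle : Γ₂ ≤ Γ₁) (g : ℂ → ℂ) (g0 : g 0 = 0)
    (h : IsColorSymmetry Γ₁ Γ₂ g) (z : ℂ) (hz : z ∈ Γ₂) : g z ∈ Γ₂ := by
  obtain ⟨σ, hσ⟩ := h
  have h1 := hσ z (hle hz)
  have h0 := hσ 0 Γ₁.zero_mem
  rw [(QuotientAddGroup.eq_zero_iff z).2 hz] at h1
  rw [g0] at h0
  have h2 : (QuotientAddGroup.mk (g z) : ℂ ⧸ Γ₂) = 0 := h1.trans h0.symm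
  exact (QuotientAddGroup.eq_zero_iff (g z)).1 h2

lemma isom_class (g : ℂ → ℂ) (hg : Isometry g) (hs : Function.Surjective g) (g0 : g 0 = 0) :
    ∃ a : ℂ, a * starRingEnd ℂ a = 1 ∧
      ((∀ z, g z = a * z) ∨ (∀ z, g z = a * starRingEnd ℂ z)) := by
  let e : ℂ ≃ᵢ ℂ := ⟨Equiv.ofBijective g ⟨hg.injective, hs⟩, hg⟩
  let f := e.toRealLinearIsometryEquivOfMapZero g0
  have hf : ∀ z, f z = g z := fun z => rfl
  obtain ⟨a, ha⟩ := linear_isometry_complex f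
  refine ⟨a, ?_, ?_⟩
  · rw [Complex.mul_conj]; simp
  · rcases ha with ha | ha
    · left; intro z; rw [← hf, ha, rotation_apply]
    · right; intro z; rw [← hf, ha]; simp [rotation_apply]

lemma mem_pcg (Γ₁ Γ₂ : AddSubgroup ℂ) (e : ℂ ≃+ ℂ) (hi : Isometry e)
    (hinv : ∀ z, e (e z) = z) (h1 : ∀ z ∈ Γ₁, e z ∈ Γ₁) (h2 : ∀ z ∈ Γ₂, e z ∈ Γ₂) :
    (e : ℂ → ℂ) ∈ pointColorGroup Γ₁ Γ₂ := by
  refine ⟨hi, e.surjective, map_zero e, ?_, colorSymm_of _ _ e fun z => ⟨fun h => ?_, h2 z⟩⟩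
  · ext z
    constructor
    · rintro ⟨w, hw, rfl⟩
      exact h1 w hw
    · intro hz
      exact ⟨e z, h1 z hz, hinv z⟩
  · rw [← hinv z]; exact h2 _ h

/-- Case (c) for the hexagonal lattice `Γ₁ = ℤ[ξ]`, `ξ = e^{2πi/3}`: if
`Im_h(u·conj v)` divides all of `Im_h(u²)`, `Im_h(v²)`, `Im_h(uv)` but none of `N(u)`,
`N(v)`, `Re_h(u·conj v)`, then the point group of the color group of the coloring of
`Γ₁` determined by `Γ₂ = ⟨u, v⟩_ℤ` has order `4`, consisting of the identity, the
`180°`-rotation, and a pair `{s, -s}` of reflections from the point group of `ℤ[ξ]`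
(type `cmm`); in particular complex conjugation is a color symmetry. -/
theorem pointColorGroup_cmm_c (ξ ζ : ℂ)
    (hξ : ξ = Complex.exp (2 * (Real.pi : ℂ) * I / 3))
    (hζ : ζ = Complex.exp ((Real.pi : ℂ) * I / 3))
    (u v : ℂ) (a₁ a₂ b₁ b₂ : ℤ)
    (hu : u = a₁ + a₂ * ξ) (hv : v = b₁ + b₂ * ξ)
    (hind : LinearIndependent ℝ ![u, v])
    (Γ₁ Γ₂ : AddSubgroup ℂ)
    (hΓ₁ : Γ₁ = AddSubgroup.closure ({1, ξ} : Set ℂ))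
    (hΓ₂ : Γ₂ = AddSubgroup.closure ({u, v} : Set ℂ))
    (p₁ p₂ nu nv q₁ q₂ r₁ r₂ s₁ s₂ : ℤ)
    (hp : u * starRingEnd ℂ v = p₁ + p₂ * ξ)
    (hnu : u * starRingEnd ℂ u = (nu : ℂ))
    (hnv : v * starRingEnd ℂ v = (nv : ℂ))
    (hq : u ^ 2 = q₁ + q₂ * ξ)
    (hr : v ^ 2 = r₁ + r₂ * ξ)
    (hs : u * v = s₁ + s₂ * ξ)
    (hdvd : p₂ ∣ q₂ ∧ p₂ ∣ r₂ ∧ p₂ ∣ s₂)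
    (hndvd : ¬ p₂ ∣ nu ∧ ¬ p₂ ∣ nv ∧ ¬ p₂ ∣ p₁) :
    (fun z => starRingEnd ℂ z) ∈ pointColorGroup Γ₁ Γ₂ ∧
      ∃ k : Fin 6, pointColorGroup Γ₁ Γ₂ =
      {fun z => z, fun z => -z, fun z => ζ ^ (k : ℕ) * starRingEnd ℂ z,
        fun z => -(ζ ^ (k : ℕ) * starRingEnd ℂ z)} := by
  obtain ⟨him, hsq, hcj⟩ := hex_xi_im ξ hξ
  have M1 := fun z => hex_mem Γ₁ 1 ξ hΓ₁ z
  have M2 := fun z => hex_mem Γ₂ u v hΓ₂ z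
  have hcu : starRingEnd ℂ u = (a₁ - a₂ : ℂ) - a₂ * ξ := by
    rw [hu]; simp [hcj]; ring
  have hcv : starRingEnd ℂ v = (b₁ - b₂ : ℂ) - b₂ * ξ := by
    rw [hv]; simp [hcj]; ring
  have P := hex_coord ξ him p₁ p₂ (a₁ * b₁ - a₁ * b₂ + a₂ * b₂) (a₂ * b₁ - a₁ * b₂) (by
    rw [← hp, hcv, hu]; push_cast; linear_combination (-a₂ * b₂ : ℂ) * hsq)
  have NU := hex_coord ξ him nu 0 (a₁ * a₁ - a₁ * a₂ + a₂ * a₂) 0 (by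
    rw [← hnu, hcu, hu]; push_cast; linear_combination (-a₂ * a₂ : ℂ) * hsq)
  have Q := hex_coord ξ him q₁ q₂ (a₁ ^ 2 - a₂ ^ 2) (2 * a₁ * a₂ - a₂ ^ 2) (by
    rw [← hq, hu]; push_cast; linear_combination (a₂ * a₂ : ℂ) * hsq)
  have R := hex_coord ξ him r₁ r₂ (b₁ ^ 2 - b₂ ^ 2) (2 * b₁ * b₂ - b₂ ^ 2) (by
    rw [← hr, hv]; push_cast; linear_combination (b₂ * b₂ : ℂ) * hsq)
  have S := hex_coord ξ him s₁ s₂ (a₁ * b₁ - a₂ * b₂) (a₁ * b₂ + a₂ * b₁ - a₂ * b₂) (by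
    rw [← hs, hu, hv]; push_cast; linear_combination (a₂ * b₂ : ℂ) * hsq)
  have hp2 : p₂ ≠ 0 := by
    intro h0
    have h00 : (a₂ * b₁ - a₁ * b₂ : ℂ) = 0 := by
      have : a₂ * b₁ - a₁ * b₂ = 0 := by rw [← P.2, h0]
      exact_mod_cast this
    rw [LinearIndependent.pair_iff] at hind
    have k1 := hind (b₂ : ℝ) (-a₂ : ℝ) (by
      simp only [Complex.real_smul]; rw [hu, hv]; push_cast; linear_combination -h00)
    have k2 := hind (b₁ : ℝ) (-a₁ : ℝ) (by
      simp only [Complex.real_smul]; rw [hu, hv]; push_cast; linear_combination ξ * h00)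
    have e1 : a₂ = 0 := by have := k1.2; simpa using this
    have e2 : a₁ = 0 := by have := k2.2; simpa using this
    have k3 := hind 1 0 (by rw [hu, e1, e2]; simp)
    exact one_ne_zero k3.1
  have hp2c : (p₂ : ℂ) ≠ 0 := by exact_mod_cast hp2
  have hle : Γ₂ ≤ Γ₁ := by
    intro z hz
    obtain ⟨m, n, rfl⟩ := (M2 z).1 hz
    refine (M1 _).2 ⟨m * a₁ + n * b₁, m * a₂ + n * b₂, ?_⟩
    rw [hu, hv]; push_cast; ring
  obtain ⟨⟨q, hq'⟩, ⟨r, hr'⟩, ⟨s, hs'⟩⟩ := hdvd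
  have Pc : (p₂ : ℂ) = a₂ * b₁ - a₁ * b₂ := by exact_mod_cast P.2
  have Qc : (2 * a₁ * a₂ - a₂ ^ 2 : ℂ) = p₂ * q := by
    rw [Q.2] at hq'; exact_mod_cast hq'
  have Rc : (2 * b₁ * b₂ - b₂ ^ 2 : ℂ) = p₂ * r := by
    rw [R.2] at hr'; exact_mod_cast hr'
  have Sc : (a₁ * b₂ + a₂ * b₁ - a₂ * b₂ : ℂ) = p₂ * s := by
    rw [S.2] at hs'; exact_mod_cast hs'
  have cu : starRingEnd ℂ u = -s * u + q * v := by
    apply mul_left_cancel₀ hp2c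
    have : (p₂ : ℂ) * (-s * u + q * v) = -(p₂ * s) * u + (p₂ * q) * v := by ring
    rw [this, ← Sc, ← Qc, hcu, Pc, hu, hv]; ring
  have cv : starRingEnd ℂ v = -r * u + s * v := by
    apply mul_left_cancel₀ hp2c
    have : (p₂ : ℂ) * (-r * u + s * v) = -(p₂ * r) * u + (p₂ * s) * v := by ring
    rw [this, ← Sc, ← Rc, hcv, Pc, hu, hv]; ring
  have c2 : ∀ z ∈ Γ₂, starRingEnd ℂ z ∈ Γ₂ := by
    intro z hz
    obtain ⟨m, n, rfl⟩ := (M2 z).1 hz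
    refine (M2 _).2 ⟨-m * s - n * r, m * q + n * s, ?_⟩
    simp only [map_add, map_mul, map_intCast, cu, cv]
    push_cast; ring
  have c1 : ∀ z ∈ Γ₁, starRingEnd ℂ z ∈ Γ₁ := by
    intro z hz
    obtain ⟨m, n, rfl⟩ := (M1 z).1 hz
    refine (M1 _).2 ⟨m - n, -n, ?_⟩
    simp only [map_add, map_mul, map_intCast, hcj, map_one]
    push_cast; ring
  have hu2 : u ∈ Γ₂ := (M2 _).2 ⟨1, 0, by simp⟩
  have hxu : ξ * u ∉ Γ₂ := by
    intro h
    obtain ⟨m, n, h⟩ := (M2 _).1 h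
    apply hndvd.1
    have K := hex_coord ξ him (-a₂) (a₁ - a₂) (m * a₁ + n * b₁) (m * a₂ + n * b₂) (by
      rw [hu, hv] at h; push_cast; linear_combination h - (a₂ : ℂ) * hsq)
    refine ⟨-n, ?_⟩
    rw [NU.1, P.2]
    linear_combination a₁ * K.2 - a₂ * K.1
  have mid : (fun z : ℂ => z) ∈ pointColorGroup Γ₁ Γ₂ :=
    mem_pcg Γ₁ Γ₂ (AddEquiv.refl ℂ) isometry_id (fun _ => rfl) (fun _ h => h) (fun _ h => h)
  have mneg : (fun z : ℂ => -z) ∈ pointColorGroup Γ₁ Γ₂ :=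
    mem_pcg Γ₁ Γ₂ (AddEquiv.neg ℂ) (LinearIsometryEquiv.neg ℝ (E := ℂ)).isometry
      (fun z => neg_neg z) (fun _ h => Γ₁.neg_mem h) (fun _ h => Γ₂.neg_mem h)
  have mconj : (fun z : ℂ => starRingEnd ℂ z) ∈ pointColorGroup Γ₁ Γ₂ :=
    mem_pcg Γ₁ Γ₂ (conjLIE.toLinearEquiv.toAddEquiv) conjLIE.isometry
      (fun z => Complex.conj_conj z) c1 c2
  have mnconj : (fun z : ℂ => -starRingEnd ℂ z) ∈ pointColorGroup Γ₁ Γ₂ :=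
    mem_pcg Γ₁ Γ₂ ((conjLIE.trans (LinearIsometryEquiv.neg ℝ)).toLinearEquiv.toAddEquiv)
      (conjLIE.trans (LinearIsometryEquiv.neg ℝ)).isometry
      (fun z => by simp) (fun z h => Γ₁.neg_mem (c1 z h)) (fun z h => Γ₂.neg_mem (c2 z h))
  refine ⟨mconj, 0, ?_⟩
  ext g
  simp only [Fin.val_zero, pow_zero, one_mul, Set.mem_insert_iff, Set.mem_singleton_iff]
  constructor
  · rintro ⟨hi, hsurj, g0, him1, hcol⟩
    obtain ⟨a, ha, hg⟩ := isom_class g hi hsurj g0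
    have ga : g 1 = a := by rcases hg with hg | hg <;> simp [hg]
    have ha1 : a ∈ Γ₁ := by
      have h1 : (1 : ℂ) ∈ Γ₁ := (M1 _).2 ⟨1, 0, by simp⟩
      have : g 1 ∈ (Γ₁ : Set ℂ) := by rw [← him1]; exact ⟨1, h1, rfl⟩
      rwa [ga] at this
    have hau : a * u ∈ Γ₂ := by
      rcases hg with hg | hg
      · rw [← hg]; exact colorSymm_mem Γ₁ Γ₂ hle g g0 hcol u hu2
      · have := colorSymm_mem Γ₁ Γ₂ hle g g0 hcol _ (c2 u hu2)
        rwa [hg, Complex.conj_conj] at this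
    obtain ⟨m, n, hmn⟩ := (M1 a).1 ha1
    rw [mul_one] at hmn
    have hN := (hex_coord ξ him (m * m - m * n + n * n) 0 1 0 (by
      rw [hmn] at ha
      simp only [map_add, map_mul, map_intCast, hcj] at ha
      push_cast; linear_combination ha + (n * n : ℂ) * hsq)).1
    have hnu' : (n : ℂ) * (ξ * u) ∈ Γ₂ := by
      have := Γ₂.sub_mem hau (Γ₂.zsmul_mem hu2 m)
      rw [hmn, zsmul_eq_mul] at this
      convert this using 1; ring
    have hn1 : n ≤ 1 := by nlinarith [sq_nonneg (2 * m - n)]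
    have hn2 : -1 ≤ n := by nlinarith [sq_nonneg (2 * m - n)]
    have hn : n = 0 := by
      have : n = -1 ∨ n = 0 ∨ n = 1 := by omega
      rcases this with h | h | h
      · rw [h] at hnu'
        have := Γ₂.neg_mem hnu'
        exact absurd (by simpa using this) hxu
      · exact h
      · rw [h] at hnu'
        exact absurd (by simpa using hnu') hxu
    rw [hn] at hN hmn
    have hm : m = 1 ∨ m = -1 := by
      exact mul_self_eq_one_iff.1 (by linarith)
    rcases hm with hm | hm <;> rw [hm] at hmn <;> rcases hg with hg | hg
    · left; funext z; rw [hg, hmn]; simp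
    · right; right; left; funext z; rw [hg, hmn]; simp
    · right; left; funext z; rw [hg, hmn]; simp
    · right; right; right; funext z; rw [hg, hmn]; simp
  · rintro (h | h | h | h) <;> rw [h] <;> assumption
end

section
/- Let ξ = e^{2πi/3}, Γ₁ = ℤ[ξ] the hexagonal lattice, and Γ₂ = ⟨u, v⟩_ℤ for ℝ-linearly independent u, v ∈ ℤ[ξ]. If Im_h(u·conj(v)) divides each of Re_h(u²), Re_h(v²), and Re_h(uv), but divides none of N(u), N(v), and Re_h(u·conj(v)), then the point group of the color group H of the coloring of Γ₁ determined by Γ₂ has order 4 and consists of the identity, the 180°-rotation z ↦ −z, and a pair {s, −s} of reflections from the point group of ℤ[ξ] (so the color group is of type cmm). -/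
open Complex

lemma pcg_mem_of_invol (Γ₁ Γ₂ : AddSubgroup ℂ) (f : ℂ →+ ℂ) (hi : Isometry f)
    (hf : ∀ z, f (f z) = z) (h1 : ∀ z ∈ Γ₁, f z ∈ Γ₁) (h2 : ∀ z ∈ Γ₂, f z ∈ Γ₂) :
    (f : ℂ → ℂ) ∈ pointColorGroup Γ₁ Γ₂ := by
  refine ⟨hi, fun z => ⟨f z, hf z⟩, map_zero f, ?_, ?_⟩
  · ext z
    constructor
    · rintro ⟨w, hw, rfl⟩
      exact h1 w hw
    · intro hz
      exact ⟨f z, h1 z hz, hf z⟩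
  · have hle : Γ₂ ≤ Γ₂.comap f := h2
    have hinv : Function.Involutive (QuotientAddGroup.map Γ₂ Γ₂ f hle) := by
      intro x
      induction x using QuotientAddGroup.induction_on with
      | H z => simp [hf]
    refine ⟨hinv.toPerm, fun l _ => ?_⟩
    simp [Function.Involutive.toPerm]

lemma mem_clos_pair (x y z : ℂ) : z ∈ AddSubgroup.closure ({x, y} : Set ℂ) ↔
    ∃ m n : ℤ, z = m * x + n * y := by
  rw [AddSubgroup.mem_closure_pair]
  simp only [zsmul_eq_mul, eq_comm]

lemma isom_cases (g : ℂ → ℂ) (hi : Isometry g) (hs : Function.Surjective g) (h0 : g 0 = 0) :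
    ∃ a : ℂ, ‖a‖ = 1 ∧ ((∀ z, g z = a * z) ∨ (∀ z, g z = a * starRingEnd ℂ z)) := by
  let e : ℂ ≃ᵢ ℂ := ⟨Equiv.ofBijective g ⟨hi.injective, hs⟩, hi⟩
  have he : ∀ z, e z = g z := fun _ => rfl
  let L := e.toRealLinearIsometryEquivOfMapZero h0
  have hL : ∀ z, L z = g z := fun z => rfl
  obtain ⟨a, ha⟩ := linear_isometry_complex L
  refine ⟨a, a.norm_coe, ?_⟩
  rcases ha with ha | ha
  · left; intro z; rw [← hL, ha]; simp
  · right; intro z; rw [← hL, ha]; simp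

lemma xi_facts (ξ ζ : ℂ)
    (hξ : ξ = Complex.exp (2 * (Real.pi : ℂ) * I / 3))
    (hζ : ζ = Complex.exp ((Real.pi : ℂ) * I / 3)) :
    ζ ^ 2 = ξ ∧ ξ ^ 2 = -1 - ξ ∧ starRingEnd ℂ ξ = -1 - ξ ∧ ξ.im ≠ 0 := by
  have h1 : ζ ^ 2 = ξ := by
    rw [hζ, hξ, ← Complex.exp_nat_mul]; congr 1; push_cast; ring
  have hz : ζ = 1/2 + (Real.sqrt 3 / 2 : ℝ) * I := by
    have : (Real.pi : ℂ) * I / 3 = ((Real.pi / 3 : ℝ) : ℂ) * I := by push_cast; ring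
    rw [hζ, this, Complex.exp_mul_I, ← Complex.ofReal_cos, ← Complex.ofReal_sin,
      Real.cos_pi_div_three, Real.sin_pi_div_three]
    push_cast; ring
  have h3 : ((Real.sqrt 3 : ℝ) : ℂ) ^ 2 = 3 := by
    rw [← Complex.ofReal_pow, Real.sq_sqrt (by norm_num)]; norm_num
  have hx : ξ = -1/2 + (Real.sqrt 3 / 2 : ℝ) * I := by
    rw [← h1, hz]; push_cast
    linear_combination (I^2/4) * h3 + (3/4) * I_sq
  refine ⟨h1, ?_, ?_, ?_⟩
  · rw [hx]; push_cast
    linear_combination (I^2/4) * h3 + (3/4) * I_sq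
  · have c2 : starRingEnd ℂ 2 = 2 := Complex.conj_ofNat 2
    rw [hx]; simp [c2]; ring
  · rw [hx]; simp

/-- Case (d) for the hexagonal lattice `Γ₁ = ℤ[ξ]`, `ξ = e^{2πi/3}`: if
`Im_h(u·conj v)` divides all of `Re_h(u²)`, `Re_h(v²)`, `Re_h(uv)` but none of `N(u)`,
`N(v)`, `Re_h(u·conj v)`, then the point group of the color group of the coloring of
`Γ₁` determined by `Γ₂ = ⟨u, v⟩_ℤ` has order `4`, consisting of the identity, the
`180°`-rotation, and a pair `{s, -s}` of reflections from the point group of `ℤ[ξ]`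
(type `cmm`). -/
theorem pointColorGroup_cmm_d (ξ ζ : ℂ)
    (hξ : ξ = Complex.exp (2 * (Real.pi : ℂ) * I / 3))
    (hζ : ζ = Complex.exp ((Real.pi : ℂ) * I / 3))
    (u v : ℂ) (a₁ a₂ b₁ b₂ : ℤ)
    (hu : u = a₁ + a₂ * ξ) (hv : v = b₁ + b₂ * ξ)
    (hind : LinearIndependent ℝ ![u, v])
    (Γ₁ Γ₂ : AddSubgroup ℂ)
    (hΓ₁ : Γ₁ = AddSubgroup.closure ({1, ξ} : Set ℂ))
    (hΓ₂ : Γ₂ = AddSubgroup.closure ({u, v} : Set ℂ))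
    (p₁ p₂ nu nv q₁ q₂ r₁ r₂ s₁ s₂ : ℤ)
    (hp : u * starRingEnd ℂ v = p₁ + p₂ * ξ)
    (hnu : u * starRingEnd ℂ u = (nu : ℂ))
    (hnv : v * starRingEnd ℂ v = (nv : ℂ))
    (hq : u ^ 2 = q₁ + q₂ * ξ)
    (hr : v ^ 2 = r₁ + r₂ * ξ)
    (hs : u * v = s₁ + s₂ * ξ)
    (hdvd : p₂ ∣ q₁ ∧ p₂ ∣ r₁ ∧ p₂ ∣ s₁)
    (hndvd : ¬ p₂ ∣ nu ∧ ¬ p₂ ∣ nv ∧ ¬ p₂ ∣ p₁) :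
    ∃ k : Fin 6, pointColorGroup Γ₁ Γ₂ =
      {fun z => z, fun z => -z, fun z => ζ ^ (k : ℕ) * starRingEnd ℂ z,
        fun z => -(ζ ^ (k : ℕ) * starRingEnd ℂ z)} := by

  obtain ⟨hz2, hx2, hxc, hxi⟩ := xi_facts ξ ζ hξ hζ
  clear hξ hζ
  have hinj : ∀ m n m' n' : ℤ, (m : ℂ) + n * ξ = m' + n' * ξ → m = m' ∧ n = n' := by
    intro m n m' n' h
    have him := congrArg Complex.im h
    simp at him
    have hn : n = n' := by
      rcases him with h | h
      · exact_mod_cast h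
      · exact absurd h hxi
    subst hn
    exact ⟨by exact_mod_cast add_right_cancel h, rfl⟩
  have hm1 : ∀ z, z ∈ Γ₁ ↔ ∃ m n : ℤ, z = m + n * ξ := by
    intro z; rw [hΓ₁, mem_clos_pair]; simp
  have hm2 : ∀ z, z ∈ Γ₂ ↔ ∃ m n : ℤ, z = m * u + n * v := by
    intro z; rw [hΓ₂, mem_clos_pair]
  have huc : starRingEnd ℂ u = (a₁ - a₂) - a₂ * ξ := by
    rw [hu]; simp [hxc]; ring
  have hvc : starRingEnd ℂ v = (b₁ - b₂) - b₂ * ξ := by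
    rw [hv]; simp [hxc]; ring
  have ep : p₂ = a₂ * b₁ - a₁ * b₂ := by
    refine (hinj p₁ p₂ (a₁ * (b₁ - b₂) + a₂ * b₂) _ ?_).2
    rw [← hp, hvc, hu]; push_cast
    linear_combination (-a₂ * b₂ : ℂ) * hx2
  have eq : q₁ = a₁ ^ 2 - a₂ ^ 2 := by
    refine (hinj q₁ q₂ _ (2 * a₁ * a₂ - a₂ ^ 2) ?_).1
    rw [← hq, hu]; push_cast
    linear_combination (a₂ ^ 2 : ℂ) * hx2
  have er : r₁ = b₁ ^ 2 - b₂ ^ 2 := by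
    refine (hinj r₁ r₂ _ (2 * b₁ * b₂ - b₂ ^ 2) ?_).1
    rw [← hr, hv]; push_cast
    linear_combination (b₂ ^ 2 : ℂ) * hx2
  have es : s₁ = a₁ * b₁ - a₂ * b₂ := by
    refine (hinj s₁ s₂ _ (a₁ * b₂ + a₂ * b₁ - a₂ * b₂) ?_).1
    rw [← hs, hu, hv]; push_cast
    linear_combination (a₂ * b₂ : ℂ) * hx2
  have hp0 : p₂ ≠ 0 := by
    intro h0
    rw [LinearIndependent.pair_iff] at hind
    have h0' : ((a₂ : ℂ) * b₁ - a₁ * b₂) = 0 := by exact_mod_cast (ep ▸ h0)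
    have k1 := hind b₁ (-a₁) (by
      simp only [Complex.real_smul]; rw [hu, hv]; push_cast; linear_combination ξ * h0')
    have k2 := hind b₂ (-a₂) (by
      simp only [Complex.real_smul]; rw [hu, hv]; push_cast; linear_combination -h0')
    have c1 : a₁ = 0 := by have := k1.2; simpa using this
    have c2 : a₂ = 0 := by have := k2.2; simpa using this
    have k3 := hind 1 0 (by rw [hu, c1, c2]; simp)
    exact one_ne_zero k3.1
  have hpC : (p₂ : ℂ) ≠ 0 := by exact_mod_cast hp0
  have epC : (p₂ : ℂ) = a₂ * b₁ - a₁ * b₂ := by exact_mod_cast ep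
  obtain ⟨⟨q, hq'⟩, ⟨r, hr'⟩, ⟨s, hs'⟩⟩ := hdvd
  have eqC : (p₂ : ℂ) * q = a₁ ^ 2 - a₂ ^ 2 := by exact_mod_cast hq' ▸ eq
  have erC : (p₂ : ℂ) * r = b₁ ^ 2 - b₂ ^ 2 := by exact_mod_cast hr' ▸ er
  have esC : (p₂ : ℂ) * s = a₁ * b₁ - a₂ * b₂ := by exact_mod_cast hs' ▸ es
  have hgu : ξ * starRingEnd ℂ u = s * u + (-q) * v := by
    apply mul_left_cancel₀ hpC
    rw [huc, hu, hv]
    linear_combination (-(p₂ : ℂ) * a₂) * hx2 + (a₂ + a₁ * ξ) * epC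
      - (a₁ + a₂ * ξ) * esC + (b₁ + b₂ * ξ) * eqC
  have hgv : ξ * starRingEnd ℂ v = r * u + (-s) * v := by
    apply mul_left_cancel₀ hpC
    rw [hvc, hu, hv]
    linear_combination (-(p₂ : ℂ) * b₂) * hx2 + (b₂ + b₁ * ξ) * epC
      - (a₁ + a₂ * ξ) * erC + (b₁ + b₂ * ξ) * esC
  have hs2 : ∀ z ∈ Γ₂, ξ * starRingEnd ℂ z ∈ Γ₂ := by
    intro z hz
    obtain ⟨m, n, rfl⟩ := (hm2 z).1 hz
    refine (hm2 _).2 ⟨m * s + n * r, -(m * q) - n * s, ?_⟩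
    simp only [map_add, map_mul, map_intCast]; push_cast
    linear_combination (m : ℂ) * hgu + (n : ℂ) * hgv
  have hs1 : ∀ z ∈ Γ₁, ξ * starRingEnd ℂ z ∈ Γ₁ := by
    intro z hz
    obtain ⟨m, n, rfl⟩ := (hm1 z).1 hz
    refine (hm1 _).2 ⟨n, m, ?_⟩
    simp only [map_add, map_mul, map_intCast, hxc]
    linear_combination (-n : ℂ) * hx2
  have hxx : ξ * starRingEnd ℂ ξ = 1 := by rw [hxc]; linear_combination -hx2
  have hnx : ‖ξ‖ = 1 := by
    have h := Complex.mul_conj ξ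
    rw [hxx] at h
    have h' : Complex.normSq ξ = 1 := by exact_mod_cast h.symm
    rw [Complex.normSq_eq_norm_sq] at h'
    nlinarith [norm_nonneg ξ]
  have hss : ∀ z, ξ * starRingEnd ℂ (ξ * starRingEnd ℂ z) = z := by
    intro z
    rw [map_mul, Complex.conj_conj]; linear_combination z * hxx
  have hu1 : u ∈ Γ₁ := (hm1 _).2 ⟨_, _, hu⟩
  have hv1 : v ∈ Γ₁ := (hm1 _).2 ⟨_, _, hv⟩
  have h21 : Γ₂ ≤ Γ₁ := by
    rw [hΓ₂, AddSubgroup.closure_le]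
    rintro z (rfl | rfl)
    · exact hu1
    · exact hv1
  have hu2 : u ∈ Γ₂ := (hm2 _).2 ⟨1, 0, by simp⟩
  have hpu : v * starRingEnd ℂ u = p₁ - p₂ - p₂ * ξ := by
    have h := congrArg (starRingEnd ℂ) hp
    simp only [map_add, map_mul, map_intCast, hxc, Complex.conj_conj] at h
    linear_combination h
  -- rotations
  have hrot : ∀ a ∈ Γ₁, ‖a‖ = 1 → a * u ∈ Γ₂ → a = 1 ∨ a = -1 := by
    intro a ha hna hau
    obtain ⟨m, n, rfl⟩ := (hm1 a).1 ha
    obtain ⟨c, d, hcd⟩ := (hm2 _).1 hau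
    have hN : m ^ 2 - m * n + n ^ 2 = 1 := by
      have h := Complex.mul_conj ((m : ℂ) + n * ξ)
      rw [Complex.normSq_eq_norm_sq, hna] at h
      simp only [map_add, map_mul, map_intCast, hxc] at h
      have h' : ((m : ℂ) ^ 2 - m * n + n ^ 2) = 1 := by
        push_cast at h
        linear_combination h + (n ^ 2 : ℂ) * hx2
      exact_mod_cast h'
    have hk : m * nu = c * nu + d * (p₁ - p₂) ∧ n * nu = - (d * p₂) := by
      apply hinj
      push_cast
      linear_combination starRingEnd ℂ u * hcd - (m + n * ξ) * hnu + c * hnu + d * hpu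
    have hd : p₂ ∣ n * nu := ⟨-d, by rw [hk.2]; ring⟩
    have hn1 : n ≤ 1 := by nlinarith [sq_nonneg (2 * m - n)]
    have hn2 : -1 ≤ n := by nlinarith [sq_nonneg (2 * m - n)]
    have hn : n = -1 ∨ n = 0 ∨ n = 1 := by omega
    rcases hn with rfl | rfl | rfl
    · exact absurd (by simpa using hd) hndvd.1
    · have : m ^ 2 = 1 := by linarith
      rcases (show m = 1 ∨ m = -1 by simpa using this) with rfl | rfl <;> simp
    · exact absurd (by simpa using hd) hndvd.1
  refine ⟨2, ?_⟩
  have h2 : ((2 : Fin 6) : ℕ) = 2 := rfl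
  rw [h2, hz2]
  apply Set.Subset.antisymm
  · rintro g ⟨hi, hsur, h0, him, σ, hσ⟩
    have hg2 : ∀ z ∈ Γ₂, g z ∈ Γ₂ := by
      intro z hz
      have e0 := hσ 0 Γ₁.zero_mem
      have ez := hσ z (h21 hz)
      have hzz : (QuotientAddGroup.mk z : ℂ ⧸ Γ₂) = QuotientAddGroup.mk 0 := by
        rw [QuotientAddGroup.mk_zero]; exact (QuotientAddGroup.eq_zero_iff z).2 hz
      rw [hzz, ← e0, h0, QuotientAddGroup.mk_zero] at ez
      exact (QuotientAddGroup.eq_zero_iff _).1 ez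
    have hg1 : g 1 ∈ Γ₁ := by
      have : g 1 ∈ g '' (Γ₁ : Set ℂ) := ⟨1, (hm1 1).2 ⟨1, 0, by simp⟩, rfl⟩
      rw [him] at this; exact this
    obtain ⟨a, hna, hga | hga⟩ := isom_cases g hi hsur h0
    · have ha : a ∈ Γ₁ := by simpa [hga] using hg1
      have hau : a * u ∈ Γ₂ := by rw [← hga]; exact hg2 u hu2
      rcases hrot a ha hna hau with rfl | rfl
      · left; funext z; simp [hga]
      · right; left; funext z; simp [hga]
    · have ha : a ∈ Γ₁ := by simpa [hga] using hg1
      have hau : (a * starRingEnd ℂ ξ) * u ∈ Γ₂ := by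
        have := hg2 _ (hs2 u hu2)
        rw [hga, map_mul, Complex.conj_conj, ← mul_assoc] at this
        exact this
      have ha' : a * starRingEnd ℂ ξ ∈ Γ₁ := by
        obtain ⟨m, n, rfl⟩ := (hm1 a).1 ha
        refine (hm1 _).2 ⟨n - m, -m, ?_⟩
        rw [hxc]; push_cast
        linear_combination (-n : ℂ) * hx2
      have hback : a = (a * starRingEnd ℂ ξ) * ξ := by linear_combination (-a) * hxx
      rcases hrot _ ha' (by rw [norm_mul, hna, RCLike.norm_conj, hnx, one_mul]) hau with h | h
      · right; right; left; funext z; rw [hga, hback, h]; ring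
      · right; right; right; funext z; rw [hga, hback, h]; ring
  · rintro g (rfl | rfl | rfl | rfl)
    · exact pcg_mem_of_invol Γ₁ Γ₂ (AddMonoidHom.id ℂ) isometry_id (fun _ => rfl)
        (fun _ h => h) (fun _ h => h)
    · exact pcg_mem_of_invol Γ₁ Γ₂ (-AddMonoidHom.id ℂ)
        (AddMonoidHomClass.isometry_of_norm _ (fun z => by simp)) (fun z => by simp)
        (fun _ h => Γ₁.neg_mem h) (fun _ h => Γ₂.neg_mem h)
    · exact pcg_mem_of_invol Γ₁ Γ₂
        ((AddMonoidHom.mulLeft ξ).comp (starRingEnd ℂ : ℂ →+* ℂ).toAddMonoidHom)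
        (AddMonoidHomClass.isometry_of_norm _ (fun z => by simp [hnx])) hss hs1 hs2
    · exact pcg_mem_of_invol Γ₁ Γ₂
        (-((AddMonoidHom.mulLeft ξ).comp (starRingEnd ℂ : ℂ →+* ℂ).toAddMonoidHom))
        (AddMonoidHomClass.isometry_of_norm _ (fun z => by simp [hnx]))
        (fun z => by
          change -(ξ * starRingEnd ℂ (-(ξ * starRingEnd ℂ z))) = z
          rw [map_neg, mul_neg, neg_neg, hss])
        (fun z h => Γ₁.neg_mem (hs1 z h)) (fun z h => Γ₂.neg_mem (hs2 z h))
end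

section
/- Let ξ = e^{2πi/3}, Γ₁ = ℤ[ξ] the hexagonal lattice, and Γ₂ = ⟨u, v⟩_ℤ for ℝ-linearly independent u, v ∈ ℤ[ξ]. Suppose none of the following holds: (i) Im_h(u·conj(v)) divides all of N(u), N(v), Re_h(u·conj(v)); (ii) Im_h(u·conj(v)) divides all of Im_h(u²), Im_h(v²), Im_h(uv); (iii) Im_h(u·conj(v)) divides all of Re_h(u²), Re_h(v²), Re_h(uv); (iv) Im_h(u·conj(v)) divides all of Re_h(u²) − Im_h(u²), Re_h(v²) − Im_h(v²), Re_h(uv) − Im_h(uv). Then the point group of the color group H of the coloring of Γ₁ determined by Γ₂ is {identity, z ↦ −z} of order 2 (so the color group is of type p2). -/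
open Complex

theorem hexaux_coord (ξ : ℂ) (him : ξ.im ≠ 0) (a b c d : ℤ)
    (h : (a : ℂ) + b * ξ = c + d * ξ) : a = c ∧ b = d := by
  have h2 := congrArg Complex.im h
  have h1 := congrArg Complex.re h
  simp at h1 h2
  have h3 : (b : ℝ) = d := by
    rcases h2 with h2 | h2
    · exact_mod_cast h2
    · exact absurd h2 him
  have h4 : b = d := by exact_mod_cast h3
  subst h4
  refine ⟨?_, rfl⟩
  have : (a : ℝ) = c := by linarith
  exact_mod_cast this

theorem hexaux_units (x y : ℤ) (h : x ^ 2 - x * y + y ^ 2 = 1) :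
    (x = 1 ∧ y = 0) ∨ (x = -1 ∧ y = 0) ∨ (x = 0 ∧ y = 1) ∨ (x = 0 ∧ y = -1) ∨
    (x = 1 ∧ y = 1) ∨ (x = -1 ∧ y = -1) := by
  have a1 : x ≤ 1 := by nlinarith [sq_nonneg (x - 2 * y)]
  have a2 : -1 ≤ x := by nlinarith [sq_nonneg (x - 2 * y)]
  have a3 : y ≤ 1 := by nlinarith [sq_nonneg (y - 2 * x)]
  have a4 : -1 ≤ y := by nlinarith [sq_nonneg (y - 2 * x)]
  interval_cases x <;> interval_cases y <;> simp_all

theorem hexaux_xi (ξ : ℂ) (hξ : ξ = Complex.exp (2 * (Real.pi : ℂ) * I / 3)) :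
    ξ ^ 2 = -1 - ξ ∧ starRingEnd ℂ ξ = -1 - ξ ∧ ξ.im ≠ 0 := by
  have h : (2 * (Real.pi : ℂ) * I / 3) = ((Real.pi - Real.pi / 3 : ℝ) : ℂ) * I := by
    push_cast; ring
  rw [h] at hξ
  have hre : ξ.re = -(1 / 2) := by
    rw [hξ, Complex.exp_ofReal_mul_I_re, Real.cos_pi_sub, Real.cos_pi_div_three]
  have him : ξ.im = √3 / 2 := by
    rw [hξ, Complex.exp_ofReal_mul_I_im, Real.sin_pi_sub, Real.sin_pi_div_three]
  have h3 : √3 * √3 = 3 := Real.mul_self_sqrt (by norm_num)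
  refine ⟨?_, ?_, ?_⟩
  · apply Complex.ext
    · simp [pow_two, hre, him]; linarith
    · simp [pow_two, hre, him]; ring
  · apply Complex.ext
    · simp [hre]; norm_num
    · simp
  · rw [him]; positivity

/-- divisibility extracted from membership -/
theorem hexaux_mem (ξ u v w : ℂ) (hc : starRingEnd ℂ ξ = -1 - ξ) (him : ξ.im ≠ 0)
    (p₁ p₂ nu nv : ℤ)
    (hp : u * starRingEnd ℂ v = p₁ + p₂ * ξ)
    (hnu : u * starRingEnd ℂ u = (nu : ℂ))
    (hnv : v * starRingEnd ℂ v = (nv : ℂ))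
    (hw : w ∈ AddSubgroup.closure ({u, v} : Set ℂ)) :
    (∀ x y : ℤ, w * starRingEnd ℂ u = x + y * ξ → p₂ ∣ y) ∧
    (∀ x y : ℤ, w * starRingEnd ℂ v = x + y * ξ → p₂ ∣ y) := by
  obtain ⟨m, n, rfl⟩ := AddSubgroup.mem_closure_pair.1 hw
  have hp' : v * starRingEnd ℂ u = p₁ + p₂ * (-1 - ξ) := by
    have := congrArg (starRingEnd ℂ) hp
    simp [hc] at this
    rw [← this]; ring
  simp only [zsmul_eq_mul]
  constructor
  · intro x y h
    have := (hexaux_coord ξ him x y (m * nu + n * (p₁ - p₂)) (-(n * p₂)) (by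
      rw [← h]; push_cast
      linear_combination (m : ℂ) * hnu + n * hp')).2
    exact ⟨-n, by rw [this]; ring⟩
  · intro x y h
    have := (hexaux_coord ξ him x y (m * p₁ + n * nv) (m * p₂) (by
      rw [← h]; push_cast
      linear_combination (m : ℂ) * hp + n * hnv)).2
    exact ⟨m, by rw [this]; ring⟩

/-- Case (f) for the hexagonal lattice `Γ₁ = ℤ[ξ]`, `ξ = e^{2πi/3}`: if none of the
divisibility criteria (a)–(e) holds, then the point group of the color group of the
coloring of `Γ₁` determined by `Γ₂ = ⟨u, v⟩_ℤ` is `{id, z ↦ -z}` of order `2`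
(type `p2`). -/
theorem pointColorGroup_hex_p2 (ξ ζ : ℂ)
    (hξ : ξ = Complex.exp (2 * (Real.pi : ℂ) * I / 3))
    (hζ : ζ = Complex.exp ((Real.pi : ℂ) * I / 3))
    (u v : ℂ) (a₁ a₂ b₁ b₂ : ℤ)
    (hu : u = a₁ + a₂ * ξ) (hv : v = b₁ + b₂ * ξ)
    (hind : LinearIndependent ℝ ![u, v])
    (Γ₁ Γ₂ : AddSubgroup ℂ)
    (hΓ₁ : Γ₁ = AddSubgroup.closure ({1, ξ} : Set ℂ))
    (hΓ₂ : Γ₂ = AddSubgroup.closure ({u, v} : Set ℂ))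
    (p₁ p₂ nu nv q₁ q₂ r₁ r₂ s₁ s₂ : ℤ)
    (hp : u * starRingEnd ℂ v = p₁ + p₂ * ξ)
    (hnu : u * starRingEnd ℂ u = (nu : ℂ))
    (hnv : v * starRingEnd ℂ v = (nv : ℂ))
    (hq : u ^ 2 = q₁ + q₂ * ξ)
    (hr : v ^ 2 = r₁ + r₂ * ξ)
    (hs : u * v = s₁ + s₂ * ξ)
    (h1 : ¬ (p₂ ∣ nu ∧ p₂ ∣ nv ∧ p₂ ∣ p₁))
    (h2 : ¬ (p₂ ∣ q₂ ∧ p₂ ∣ r₂ ∧ p₂ ∣ s₂))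
    (h3 : ¬ (p₂ ∣ q₁ ∧ p₂ ∣ r₁ ∧ p₂ ∣ s₁))
    (h4 : ¬ (p₂ ∣ (q₁ - q₂) ∧ p₂ ∣ (r₁ - r₂) ∧ p₂ ∣ (s₁ - s₂))) :
    pointColorGroup Γ₁ Γ₂ = {fun z => z, fun z => -z} := by
  obtain ⟨hsq, hc, him⟩ := hexaux_xi ξ hξ
  have hsub : ∀ z ∈ Γ₂, z ∈ Γ₁ := by
    intro z hz
    rw [hΓ₂] at hz
    obtain ⟨m, n, rfl⟩ := AddSubgroup.mem_closure_pair.1 hz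
    rw [hΓ₁]
    refine AddSubgroup.mem_closure_pair.2 ⟨m * a₁ + n * b₁, m * a₂ + n * b₂, ?_⟩
    simp only [zsmul_eq_mul, hu, hv]; push_cast; ring
  have huΓ : u ∈ Γ₂ := by rw [hΓ₂]; exact AddSubgroup.subset_closure (by simp)
  have hvΓ : v ∈ Γ₂ := by rw [hΓ₂]; exact AddSubgroup.subset_closure (by simp)
  have hmem : ∀ w ∈ Γ₂, (∀ x y : ℤ, w * starRingEnd ℂ u = x + y * ξ → p₂ ∣ y) ∧
      (∀ x y : ℤ, w * starRingEnd ℂ v = x + y * ξ → p₂ ∣ y) := by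
    intro w hw
    exact hexaux_mem ξ u v w hc him p₁ p₂ nu nv hp hnu hnv (hΓ₂ ▸ hw)
  have hq' : starRingEnd ℂ u * starRingEnd ℂ u = q₁ + q₂ * (-1 - ξ) := by
    have := congrArg (starRingEnd ℂ) hq
    simp [hc] at this
    rw [← this]; ring
  have hr' : starRingEnd ℂ v * starRingEnd ℂ v = r₁ + r₂ * (-1 - ξ) := by
    have := congrArg (starRingEnd ℂ) hr
    simp [hc] at this
    rw [← this]; ring
  have hs' : starRingEnd ℂ u * starRingEnd ℂ v = s₁ + s₂ * (-1 - ξ) := by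
    have := congrArg (starRingEnd ℂ) hs
    simpa [hc] using this
  have hp' : v * starRingEnd ℂ u = p₁ + p₂ * (-1 - ξ) := by
    have := congrArg (starRingEnd ℂ) hp
    simp [hc] at this
    rw [← this]; ring
  -- rotations
  have rot : (ξ * u ∈ Γ₂) → (ξ * v ∈ Γ₂) → False := by
    intro hU hV
    have e1 := (hmem _ hU).1 0 nu (by push_cast; linear_combination ξ * hnu)
    have e2 := (hmem _ hV).2 0 nv (by push_cast; linear_combination ξ * hnv)
    have e3 := (hmem _ hU).2 (-p₂) (p₁ - p₂) (by
      push_cast; linear_combination ξ * hp + p₂ * hsq)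
    exact h1 ⟨e1, e2, by simpa using dvd_add e3 (dvd_refl p₂)⟩
  have refl0 : (starRingEnd ℂ u ∈ Γ₂) → (starRingEnd ℂ v ∈ Γ₂) → False := by
    intro hU hV
    have e1 := (hmem _ hU).1 (q₁ - q₂) (-q₂) (by push_cast; linear_combination hq')
    have e2 := (hmem _ hV).2 (r₁ - r₂) (-r₂) (by push_cast; linear_combination hr')
    have e3 := (hmem _ hU).2 (s₁ - s₂) (-s₂) (by push_cast; linear_combination hs')
    exact h2 ⟨(dvd_neg.1 e1), (dvd_neg.1 e2), (dvd_neg.1 e3)⟩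
  have refl1 : (ξ * starRingEnd ℂ u ∈ Γ₂) → (ξ * starRingEnd ℂ v ∈ Γ₂) → False := by
    intro hU hV
    have e1 := (hmem _ hU).1 q₂ q₁ (by linear_combination ξ * hq' - q₂ * hsq)
    have e2 := (hmem _ hV).2 r₂ r₁ (by linear_combination ξ * hr' - r₂ * hsq)
    have e3 := (hmem _ hU).2 s₂ s₁ (by linear_combination ξ * hs' - s₂ * hsq)
    exact h3 ⟨e1, e2, e3⟩
  have refl2 : ((1 + ξ) * starRingEnd ℂ u ∈ Γ₂) → ((1 + ξ) * starRingEnd ℂ v ∈ Γ₂) →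
      False := by
    intro hU hV
    have e1 := (hmem _ hU).1 q₁ (q₁ - q₂) (by
      push_cast; linear_combination (1 + ξ) * hq' - q₂ * hsq)
    have e2 := (hmem _ hV).2 r₁ (r₁ - r₂) (by
      push_cast; linear_combination (1 + ξ) * hr' - r₂ * hsq)
    have e3 := (hmem _ hU).2 s₁ (s₁ - s₂) (by
      push_cast; linear_combination (1 + ξ) * hs' - s₂ * hsq)
    exact h4 ⟨e1, e2, e3⟩
  ext g
  simp only [Set.mem_insert_iff, Set.mem_singleton_iff]
  constructor
  · rintro ⟨hiso, hsurj, h0, himg, σ, hσ⟩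
    have hinv : ∀ w ∈ Γ₂, g w ∈ Γ₂ := by
      intro w hw
      have t0 := hσ 0 Γ₁.zero_mem
      have t1 := hσ w (hsub w hw)
      have t2 : (QuotientAddGroup.mk w : ℂ ⧸ Γ₂) = QuotientAddGroup.mk 0 := by
        rw [QuotientAddGroup.mk_zero]; exact (QuotientAddGroup.eq_zero_iff w).2 hw
      rw [t2, ← t0, h0, QuotientAddGroup.mk_zero] at t1
      exact (QuotientAddGroup.eq_zero_iff _).1 t1
    have hU := hinv u huΓ
    have hV := hinv v hvΓ
    have hone : g 1 ∈ Γ₁ := by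
      have : g 1 ∈ g '' (Γ₁ : Set ℂ) := ⟨1, by
        rw [hΓ₁]; exact AddSubgroup.subset_closure (by simp), rfl⟩
      rw [himg] at this
      exact this
    rw [hΓ₁] at hone
    obtain ⟨x, y, hxy⟩ := AddSubgroup.mem_closure_pair.1 hone
    simp only [zsmul_eq_mul, mul_one] at hxy
    have hform : ∃ a : ℂ, a * starRingEnd ℂ a = 1 ∧
        ((∀ z, g z = a * z) ∨ (∀ z, g z = a * starRingEnd ℂ z)) := by
      let e : ℂ ≃ᵢ ℂ := ⟨Equiv.ofBijective g ⟨hiso.injective, hsurj⟩, hiso⟩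
      let f : ℂ ≃ₗᵢ[ℝ] ℂ := e.toRealLinearIsometryEquivOfMapZero h0
      have hf : ∀ z, f z = g z := fun z => rfl
      obtain ⟨a, ha⟩ := linear_isometry_complex f
      refine ⟨a, ?_, ?_⟩
      · rw [Complex.mul_conj, Circle.normSq_coe]; simp
      · rcases ha with ha | ha
        · left; intro z; rw [← hf, ha]; simp [rotation_apply]
        · right; intro z; rw [← hf, ha]; simp [rotation_apply]
    obtain ⟨a, haa, hg⟩ := hform
    have ha1 : a = x + y * ξ := by
      rw [hxy]
      rcases hg with hg | hg <;> simp [hg]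
    have hN : x ^ 2 - x * y + y ^ 2 = 1 := by
      refine (hexaux_coord ξ him _ 0 1 0 ?_).1
      rw [ha1] at haa
      simp [hc] at haa
      push_cast
      linear_combination haa + (y : ℂ) ^ 2 * hsq
    have hneg : ∀ w, -w ∈ Γ₂ → w ∈ Γ₂ := fun w h => by simpa using h
    have hmulneg : ∀ w, (1 + ξ) * w ∈ Γ₂ → w ∈ Γ₂ → ξ * w ∈ Γ₂ := fun w h h' => by
      have := Γ₂.sub_mem h h'
      convert this using 1; ring
    rcases hg with hg | hg
    · rw [hg, ha1] at hU hV
      rcases hexaux_units x y hN with ⟨rfl, rfl⟩ | ⟨rfl, rfl⟩ | ⟨rfl, rfl⟩ | ⟨rfl, rfl⟩ |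
        ⟨rfl, rfl⟩ | ⟨rfl, rfl⟩
      · left; funext z; rw [hg, ha1]; simp
      · right; funext z; rw [hg, ha1]; simp
      · exact (rot (by simpa using hU) (by simpa using hV)).elim
      · exact (rot (by simpa using hU) (by simpa using hV)).elim
      · exact (rot (hmulneg _ (by simpa using hU) huΓ) (hmulneg _ (by simpa using hV) hvΓ)).elim
      · refine (rot (hmulneg _ (hneg _ ?_) huΓ) (hmulneg _ (hneg _ ?_) hvΓ)).elim
        · convert hU using 1; push_cast; ring
        · convert hV using 1; push_cast; ring
    · exfalso
      rw [hg, ha1] at hU hV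
      rcases hexaux_units x y hN with ⟨rfl, rfl⟩ | ⟨rfl, rfl⟩ | ⟨rfl, rfl⟩ | ⟨rfl, rfl⟩ |
        ⟨rfl, rfl⟩ | ⟨rfl, rfl⟩
      · exact refl0 (by simpa using hU) (by simpa using hV)
      · exact refl0 (by simpa using hU) (by simpa using hV)
      · exact refl1 (by simpa using hU) (by simpa using hV)
      · exact refl1 (by simpa using hU) (by simpa using hV)
      · exact refl2 (by simpa using hU) (by simpa using hV)
      · refine refl2 (hneg _ ?_) (hneg _ ?_)
        · convert hU using 1; push_cast; ring
        · convert hV using 1; push_cast; ring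
  · rintro (rfl | rfl)
    · exact ⟨isometry_id, Function.surjective_id, rfl, by simp, Equiv.refl _, fun _ _ => rfl⟩
    · refine ⟨(LinearIsometryEquiv.neg ℝ : ℂ ≃ₗᵢ[ℝ] ℂ).isometry, neg_surjective, neg_zero, ?_,
        Equiv.neg _, fun _ _ => rfl⟩
      ext z
      constructor
      · rintro ⟨w, hw, rfl⟩; exact Γ₁.neg_mem hw
      · intro hz; exact ⟨-z, Γ₁.neg_mem hz, neg_neg z⟩
end

section
/- Let ξ = e^{iπ/4} and let M₂ = ⟨1, 2ξ, ξ², 2ξ³⟩_ℤ be the ℤ-submodule of ℤ[ξ] generated by 1, 2ξ, ξ², and 2ξ³. Then M₂ is invariant under multiplication by ξ² = i (i.e., ξ²·M₂ = M₂) and under complex conjugation (conj(M₂) = M₂), but M₂ is not invariant under multiplication by ξ (ξ·M₂ ≠ M₂). Consequently, the subgroup of the dihedral point group D₈ of ℤ[ξ] (generated by the 45°-rotation z ↦ ξz and conjugation z ↦ conj(z)) that leaves M₂ invariant is exactly the dihedral group of order 8 generated by z ↦ ξ²z and z ↦ conj(z). -/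
open Complex

/-- Let `ξ = e^{iπ/4}` and `M₂ = ⟨1, 2ξ, ξ², 2ξ³⟩_ℤ ⊆ ℤ[ξ] ⊆ ℂ`.  Then `M₂` is
invariant under multiplication by `ξ² = i` and under complex conjugation, but not under
multiplication by `ξ`; consequently the subgroup of the dihedral point group `D₈` of
`ℤ[ξ]` (generated by `z ↦ ξz` and `z ↦ conj z`) leaving `M₂` invariant is exactly the
dihedral group of order `8` generated by `z ↦ ξ²z` and `z ↦ conj z`. -/
theorem amannBeenker_D4_coloring (ξ : ℂ)
    (hξ : ξ = Complex.exp ((Real.pi : ℂ) * I / 4))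
    (M₂ : Set ℂ)
    (hM₂ : M₂ = {z | ∃ a₁ a₂ a₃ a₄ : ℤ,
      z = a₁ * 1 + a₂ * (2 * ξ) + a₃ * ξ ^ 2 + a₄ * (2 * ξ ^ 3)}) :
    (fun z => ξ ^ 2 * z) '' M₂ = M₂ ∧
    (fun z => starRingEnd ℂ z) '' M₂ = M₂ ∧
    (fun z => ξ * z) '' M₂ ≠ M₂ ∧
    {g : ℂ → ℂ | (∃ k : Fin 8, g = (fun z => ξ ^ (k : ℕ) * z) ∨
        g = (fun z => ξ ^ (k : ℕ) * starRingEnd ℂ z)) ∧ g '' M₂ = M₂} =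
      {g : ℂ → ℂ | ∃ k : Fin 4, g = (fun z => (ξ ^ 2) ^ (k : ℕ) * z) ∨
        g = (fun z => (ξ ^ 2) ^ (k : ℕ) * starRingEnd ℂ z)} := by
  have h2 : ξ ^ 2 = I := by
    rw [hξ, ← Complex.exp_nat_mul]
    refine Eq.trans ?_ Complex.exp_pi_div_two_mul_I
    congr 1
    push_cast
    ring
  have h4 : ξ ^ 4 = -1 := by
    have : ξ ^ 4 = (ξ ^ 2) ^ 2 := by ring
    rw [this, h2, I_sq]
  have h8 : ξ ^ 8 = 1 := by
    have : ξ ^ 8 = (ξ ^ 4) ^ 2 := by ring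
    rw [this, h4]; norm_num
  have hx : ξ = ((√2 / 2 : ℝ) : ℂ) + ((√2 / 2 : ℝ) : ℂ) * I := by
    have : (Real.pi : ℂ) * I / 4 = ((Real.pi / 4 : ℝ) : ℂ) * I := by push_cast; ring
    rw [hξ, this, Complex.exp_mul_I, ← Complex.ofReal_cos, ← Complex.ofReal_sin,
      Real.cos_pi_div_four, Real.sin_pi_div_four]
  have hc : starRingEnd ℂ ξ = -ξ ^ 3 := by
    have : ξ ^ 3 = ξ ^ 2 * ξ := by ring
    rw [this, h2, hx]
    simp only [map_add, map_mul, Complex.conj_ofReal, Complex.conj_I]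
    linear_combination ((√2 / 2 : ℝ) : ℂ) * I_sq
  have hmul : ∀ z ∈ M₂, ξ ^ 2 * z ∈ M₂ := by
    rw [hM₂]
    rintro z ⟨a, b, c, d, rfl⟩
    refine ⟨-c, -d, a, b, ?_⟩
    push_cast
    linear_combination ((c : ℂ) + 2 * d * ξ) * h4
  have hpow : ∀ n : ℕ, ∀ z ∈ M₂, (ξ ^ 2) ^ n * z ∈ M₂ := by
    intro n
    induction n with
    | zero => intro z hz; simpa using hz
    | succ n ih =>
      intro z hz
      have := hmul _ (ih z hz)
      rwa [← mul_assoc, ← pow_succ'] at this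
  have hconj : ∀ z ∈ M₂, starRingEnd ℂ z ∈ M₂ := by
    rw [hM₂]
    rintro z ⟨a, b, c, d, rfl⟩
    refine ⟨a, -d, -c, -b, ?_⟩
    simp only [map_add, map_mul, map_pow, hc, map_intCast, map_one, map_ofNat]
    push_cast
    linear_combination ((c : ℂ) * ξ ^ 2 - 2 * d * (ξ ^ 5 - ξ)) * h4
  have h1 : (1 : ℂ) ∈ M₂ := by
    rw [hM₂]; exact ⟨1, 0, 0, 0, by simp⟩
  have hnot : ξ ∉ M₂ := by
    rw [hM₂]
    rintro ⟨a, b, c, d, h⟩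
    have h3 : ξ ^ 3 = ξ ^ 2 * ξ := by ring
    rw [h3, h2, hx] at h
    have hre := congrArg Complex.re h
    simp at hre
    have hs : √2 ^ 2 = (2 : ℝ) := Real.sq_sqrt (by norm_num)
    have e : (2 * a : ℝ) = √2 * (1 - 2 * (b - d)) := by linarith
    have e2 : (2 * a : ℝ) ^ 2 = 2 * (1 - 2 * (b - d)) ^ 2 := by
      rw [e, mul_pow, hs]
    have e3 : (2 * a) ^ 2 = 2 * (1 - 2 * (b - d)) ^ 2 := by exact_mod_cast e2
    have e4 : 2 * (a ^ 2 + 2 * (b - d) - 2 * (b - d) ^ 2) = 1 := by linarith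
    omega
  have hodd : ∀ j : ℕ, j < 4 → ξ ^ (2 * j + 1) ∉ M₂ := by
    intro j hj hm
    apply hnot
    have := hpow (4 - j) _ hm
    rw [← pow_mul, ← pow_add] at this
    have e : 2 * (4 - j) + (2 * j + 1) = 8 + 1 := by omega
    rwa [e, pow_add, h8, one_mul, pow_one] at this
  have hinv : ∀ j : ℕ, j < 4 → (ξ ^ 2) ^ j * (ξ ^ 2) ^ (4 - j) = 1 := by
    intro j hj
    rw [← pow_add, ← pow_mul]
    have e : 2 * (j + (4 - j)) = 8 := by omega
    rw [e, h8]
  have himg : ∀ j : ℕ, j < 4 → (fun z => (ξ ^ 2) ^ j * z) '' M₂ = M₂ := by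
    intro j hj
    apply Set.Subset.antisymm
    · rintro _ ⟨z, hz, rfl⟩
      exact hpow j z hz
    · intro z hz
      refine ⟨_, hpow (4 - j) z hz, ?_⟩
      simp only
      rw [← mul_assoc, hinv j hj, one_mul]
  have himg' : ∀ j : ℕ, j < 4 → (fun z => (ξ ^ 2) ^ j * starRingEnd ℂ z) '' M₂ = M₂ := by
    intro j hj
    apply Set.Subset.antisymm
    · rintro _ ⟨z, hz, rfl⟩
      exact hpow j _ (hconj z hz)
    · intro z hz
      refine ⟨_, hconj _ (hpow (4 - j) z hz), ?_⟩
      simp only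
      rw [Complex.conj_conj, ← mul_assoc, hinv j hj, one_mul]
  refine ⟨by simpa using himg 1 (by norm_num), by simpa using himg' 0 (by norm_num), ?_, ?_⟩
  · intro h
    apply hnot
    rw [← h]
    exact ⟨1, h1, by simp⟩
  · ext g
    constructor
    · rintro ⟨⟨k, hk⟩, hg⟩
      have hg1 : g 1 ∈ M₂ := by
        rw [← hg]; exact ⟨1, h1, rfl⟩
      have hk1 : ξ ^ (k : ℕ) ∈ M₂ := by
        rcases hk with rfl | rfl <;> simpa using hg1
      have hk8 := k.isLt
      obtain ⟨j, hj | hj⟩ := Nat.even_or_odd' (k : ℕ)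
      · refine ⟨⟨j, by omega⟩, ?_⟩
        rw [hj, pow_mul] at hk
        exact hk
      · rw [hj] at hk1
        exact absurd hk1 (hodd j (by omega))
    · rintro ⟨k, hk⟩
      have hk4 := k.isLt
      refine ⟨⟨⟨2 * k, by omega⟩, ?_⟩, ?_⟩
      · simp only [pow_mul]
        exact hk
      · rcases hk with rfl | rfl
        · exact himg k hk4
        · exact himg' k hk4
end
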